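/- arXiv:math/0302251 — 2 statements merged into one kernel-verified Lean document; each statement's English description precedes it below -/
import Mathlib

section
/- Let k₁, k₂ > 1, t ∈ ℝ, 0 < φ < π and −1 ≤ y ≤ 1. Then as x → +∞ (x real), w(x+iy) = 2π e^{2t(φ−π)+4iy(φ−π)} x^{2k₁+2k₂−2} e^{−4(π−φ)x} (1 + O(1/x)), and as x → −∞, w(x+iy) = 2π e^{2φt+4iφy} |x|^{2k₁+2k₂−2} e^{4φx} (1 + O(1/x)). -/
noncomputable section

open MeasureTheory Filter Topology Set Asymptotics ComplexConjugate
open Complex (I)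

/-- The weight function `w(z)`. -/
def wfun (k₁ k₂ t φ : ℝ) (z : ℂ) : ℂ :=
  ((1 / (2 * Real.pi) : ℝ) : ℂ) *
    Complex.exp ((2 * z + (t : ℂ)) * (2 * (φ : ℂ) - (Real.pi : ℂ))) *
    Complex.Gamma ((k₁ : ℂ) + I * t + I * z) * Complex.Gamma ((k₁ : ℂ) - I * t - I * z) *
    Complex.Gamma ((k₂ : ℂ) + I * z) * Complex.Gamma ((k₂ : ℂ) - I * z)

/-!
Euler's product writes `Γ(z + c) / (Γ(z) z ^ c)` as the product over `j` of the factors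
`(1 + 1 / w) ^ c / (1 + c / w)` at `w = z + j`. Each of them is `1 + O(|w| ^ -2)`, because the first
order terms in `1 / w` cancel, and summing over `j` yields `1 + O(1 / |z|)` in every sector that
avoids the negative real axis. The reflection formula turns `Γ(a + is) Γ(b - is)` into such a
quotient times `z ^ (a + b - 1) π / sin πz` with `z = 1 - b + is`, where the sine is exponentially
close to a pure exponential. The weight is an exponential times two such pairs, and it is invariant
under `(z, t, φ) ↦ (-z, -t, π - φ)`, which exchanges the two ends of the real line.
-/

open Bornology (cobounded)

section BigO

variable {α : Type*} {l : Filter α}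

lemma isBigO_mul_sub_one {R F : Type*} [SeminormedRing R] [NormedDivisionRing F]
    {f g : α → R} {r : α → F}
    (hf : (fun x ↦ f x - 1) =O[l] r) (hg : (fun x ↦ g x - 1) =O[l] r)
    (hr : r =O[l] fun _ ↦ (1 : F)) : (fun x ↦ f x * g x - 1) =O[l] r := by
  have hfg : (fun x ↦ (f x - 1) * (g x - 1)) =O[l] r := by simpa using hf.mul (hg.trans hr)
  exact ((hfg.add hf).add hg).congr_left fun x ↦ by noncomm_ring

lemma isBigO_comp_sub_one {𝕜 E : Type*} [NontriviallyNormedField 𝕜] [NormedRing E]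
    [NormedSpace 𝕜 E] {F : Type*} [NormedAddCommGroup F]
    {h : 𝕜 → E} (hd : DifferentiableAt 𝕜 h 0) (h0 : h 0 = 1) {u : α → 𝕜} {r : α → F}
    (hu : u =O[l] r) (hr : Tendsto r l (𝓝 0)) :
    (fun x ↦ h (u x) - 1) =O[l] r := by
  have key := hd.isBigO_sub.comp_tendsto (hu.trans_tendsto hr)
  simp only [h0, sub_zero] at key
  exact key.trans hu

end BigO

lemma isBigO_const_div_ofReal (a : ℂ) :
    (fun x : ℝ ↦ a / (x : ℂ)) =O[atTop] fun x : ℝ ↦ 1 / x :=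
  IsBigO.of_bound ‖a‖ <| .of_forall fun x ↦ by simp [div_eq_mul_inv]

lemma tendsto_one_div_atTop : Tendsto (fun x : ℝ ↦ 1 / x) atTop (𝓝 0) := by
  simpa using tendsto_inv_atTop_zero (𝕜 := ℝ)

lemma isBigO_sub_linear_of_analyticAt {𝕜 E : Type*} [NontriviallyNormedField 𝕜]
    [NormedAddCommGroup E] [NormedSpace 𝕜 E] {f : 𝕜 → E} {x : 𝕜} (hf : AnalyticAt 𝕜 f x) :
    (fun y ↦ f (x + y) - (f x + y • deriv f x)) =O[𝓝 0] fun y ↦ ‖y‖ ^ 2 := by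
  obtain ⟨p, hp⟩ := hf
  refine (hp.isBigO_sub_partialSum_pow 2).congr_left fun y ↦ ?_
  have hp0 : p.coeff 0 = f x := hp.coeff_zero 1
  have hp1 : p.coeff 1 = deriv f x := hp.deriv.symm
  simp [FormalMultilinearSeries.partialSum, Finset.sum_range_succ, hp0, hp1]

lemma sum_range_one_div_add_sq_le {r : ℝ} (hr : 2 ≤ r) (n : ℕ) :
    ∑ j ∈ Finset.range n, 1 / (r + j) ^ 2 ≤ 2 / r := by
  let f : ℕ → ℝ := fun j ↦ 1 / (r - 1 + j)
  have term_le (j : ℕ) : 1 / (r + j) ^ 2 ≤ f j - f (j + 1) := by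
    have hden : 0 < r - 1 + j := by linarith [j.cast_nonneg (α := ℝ)]
    have hden' : 0 < r - 1 + (j + 1) := by linarith
    have hsq : 0 < (r + j) ^ 2 := pow_pos (by linarith) 2
    simp only [f, Nat.cast_add_one]
    rw [div_sub_div _ _ hden.ne' hden'.ne', div_le_div_iff₀ hsq (mul_pos hden hden')]
    nlinarith
  calc ∑ j ∈ Finset.range n, 1 / (r + j) ^ 2
      ≤ ∑ j ∈ Finset.range n, (f j - f (j + 1)) := Finset.sum_le_sum fun j _ ↦ term_le j
    _ = f 0 - f n := Finset.sum_range_sub' f n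
    _ ≤ f 0 := sub_le_self _ (one_div_nonneg.2 (by linarith [n.cast_nonneg (α := ℝ)]))
    _ ≤ 2 / r := by
      simp only [f, Nat.cast_zero, add_zero]
      rw [div_le_div_iff₀ (by linarith) (by linarith)]
      linarith

section Cpow

lemma cpow_ne_zero_of_ne_zero {z : ℂ} (hz : z ≠ 0) (c : ℂ) : z ^ c ≠ 0 :=
  Complex.cpow_ne_zero_iff.2 (.inl hz)

lemma ofReal_mul_cpow {r : ℝ} (hr : 0 < r) {z : ℂ} (hz : z ≠ 0) (c : ℂ) :
    ((r : ℂ) * z) ^ c = (r : ℂ) ^ c * z ^ c := by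
  have hr' : (r : ℂ) ≠ 0 := Complex.ofReal_ne_zero.2 hr.ne'
  rw [Complex.cpow_def_of_ne_zero (mul_ne_zero hr' hz), Complex.cpow_def_of_ne_zero hr',
    Complex.cpow_def_of_ne_zero hz, Complex.log_ofReal_mul hr hz, ← Complex.exp_add,
    Complex.ofReal_log hr.le, add_mul]

lemma I_cpow (c : ℂ) : I ^ c = Complex.exp (I * Real.pi * c / 2) := by
  rw [Complex.cpow_def_of_ne_zero Complex.I_ne_zero, Complex.log_I]
  ring_nf

lemma add_natCast_mem_slitPlane {z : ℂ} (hz : z ∈ Complex.slitPlane) (n : ℕ) :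
    z + n ∈ Complex.slitPlane := by
  rw [Complex.mem_slitPlane_iff] at hz ⊢
  simp only [Complex.add_re, Complex.natCast_re, Complex.add_im, Complex.natCast_im, add_zero]
  exact hz.imp_left fun h ↦ by positivity

lemma add_one_cpow {z : ℂ} (hz : z ∈ Complex.slitPlane) (c : ℂ) :
    (z + 1) ^ c = z ^ c * (1 + 1 / z) ^ c := by
  have hz0 : z ≠ 0 := Complex.slitPlane_ne_zero hz
  have hz1 : z + 1 ≠ 0 := by
    simpa using Complex.slitPlane_ne_zero (add_natCast_mem_slitPlane hz 1)
  have hmul : z * (1 + 1 / z) = z + 1 := by field_simp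
  have hw0 : 1 + 1 / z ≠ 0 := right_ne_zero_of_mul (hmul ▸ hz1)
  have him : (1 + 1 / z).im = -z.im / Complex.normSq z := by simp [Complex.inv_im]
  have harg : z.arg + (1 + 1 / z).arg ∈ Ioc (-Real.pi) Real.pi := by
    have hN : 0 < Complex.normSq z := Complex.normSq_pos.2 hz0
    have hz_gt := Complex.neg_pi_lt_arg z
    have hz_le := Complex.arg_le_pi z
    have hw_gt := Complex.neg_pi_lt_arg (1 + 1 / z)
    have hw_le := Complex.arg_le_pi (1 + 1 / z)
    rcases lt_trichotomy z.im 0 with h | h | h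
    · have hz_neg := Complex.arg_neg_iff.2 h
      have hw_nonneg := Complex.arg_nonneg_iff.2 (him ▸ div_nonneg (neg_nonneg.2 h.le) hN.le)
      constructor <;> linarith
    · have hre : 0 < z.re := (Complex.mem_slitPlane_iff.1 hz).resolve_right (absurd h)
      have hz_arg : z.arg = 0 := Complex.arg_eq_zero_iff.2 ⟨hre.le, h⟩
      rw [hz_arg, zero_add]
      exact ⟨hw_gt, hw_le⟩
    · have hz_nonneg := Complex.arg_nonneg_iff.2 h.le
      have hw_neg := Complex.arg_neg_iff.2 (him ▸ div_neg_of_neg_of_pos (neg_lt_zero.2 h) hN)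
      constructor <;> linarith
  rw [← hmul, Complex.cpow_def_of_ne_zero (mul_ne_zero hz0 hw0),
    Complex.cpow_def_of_ne_zero hz0, Complex.cpow_def_of_ne_zero hw0,
    Complex.log_mul hz0 hw0 harg, ← Complex.exp_add, add_mul]

lemma isBigO_cpow_line_div_sub_one (a c : ℂ) {u : ℂ} (hu : u ∈ Complex.slitPlane) :
    (fun s : ℝ ↦ (a + u * s) ^ c / ((s : ℂ) ^ c * u ^ c) - 1) =O[atTop] fun s : ℝ ↦ 1 / s := by
  have hu0 : u ^ c ≠ 0 := cpow_ne_zero_of_ne_zero (Complex.slitPlane_ne_zero hu) c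
  have hd : DifferentiableAt ℂ (fun δ : ℂ ↦ (u + δ) ^ c / u ^ c) 0 :=
    (DifferentiableAt.cpow (by fun_prop) (by fun_prop) (by simpa using hu)).div_const _
  have hO := isBigO_comp_sub_one hd (by simp [hu0]) (isBigO_const_div_ofReal a)
    tendsto_one_div_atTop
  refine hO.congr' ?_ .rfl
  have hlim : Tendsto (fun s : ℝ ↦ u + a / (s : ℂ)) atTop (𝓝 (u + 0)) :=
    tendsto_const_nhds.add ((isBigO_const_div_ofReal a).trans_tendsto tendsto_one_div_atTop)
  have hne : ∀ᶠ s : ℝ in atTop, u + a / (s : ℂ) ≠ 0 :=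
    hlim.eventually_ne (by simpa using Complex.slitPlane_ne_zero hu)
  filter_upwards [eventually_gt_atTop 0, hne] with s hs hne
  have hs0 : (s : ℂ) ≠ 0 := Complex.ofReal_ne_zero.2 hs.ne'
  have hfactor : a + u * s = s * (u + a / s) := by field_simp; ring
  rw [hfactor, ofReal_mul_cpow hs hne, mul_div_mul_left _ _ (cpow_ne_zero_of_ne_zero hs0 c)]

end Cpow

section GammaRatio

/-- The quotient `Γ(z + c) / (Γ(z) z ^ c)`, which tends to `1` as `z → ∞` away from the negative
real axis; `z ^ c` is the principal branch. -/
def gammaRatio (c z : ℂ) : ℂ := Complex.Gamma (z + c) / (Complex.Gamma z * z ^ c)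

/-- The quotient of `gammaRatio c z` and `gammaRatio c (z + 1)`, so that `gammaRatio c z` is the
infinite product of `gammaRatioFactor c (z + j)` over `j`. -/
def gammaRatioFactor (c z : ℂ) : ℂ := (1 + 1 / z) ^ c / (1 + c / z)

lemma gammaRatioFactor_eq {z : ℂ} (hz : z ∈ Complex.slitPlane) (c : ℂ) :
    gammaRatioFactor c z = (z + 1) ^ c / z ^ c * (z / (z + c)) := by
  have hz0 : z ≠ 0 := Complex.slitPlane_ne_zero hz
  have hcpow : z ^ c ≠ 0 := cpow_ne_zero_of_ne_zero hz0 c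
  rw [gammaRatioFactor, add_one_cpow hz, mul_div_cancel_left₀ _ hcpow, one_add_div hz0,
    one_add_div hz0, div_div_eq_mul_div, mul_div_assoc]

lemma prod_gammaRatioFactor {z : ℂ} (hz : z ∈ Complex.slitPlane) (c : ℂ) (n : ℕ) :
    ∏ j ∈ Finset.range n, gammaRatioFactor c (z + j) =
      (z + n) ^ c / z ^ c *
        ((∏ j ∈ Finset.range n, (z + j)) / ∏ j ∈ Finset.range n, (z + c + j)) := by
  have hcpow (j : ℕ) : (z + j) ^ c ≠ 0 :=
    cpow_ne_zero_of_ne_zero (Complex.slitPlane_ne_zero (add_natCast_mem_slitPlane hz j)) c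
  have telescope : ∏ j ∈ Finset.range n, (z + j + 1) ^ c / (z + j) ^ c = (z + n) ^ c / z ^ c := by
    induction n with
    | zero => simpa using (div_self (hcpow 0)).symm
    | succ n ih =>
      rw [Finset.prod_range_succ, ih, Nat.cast_add_one, ← add_assoc, mul_comm,
        div_mul_div_cancel₀ (hcpow n)]
  calc ∏ j ∈ Finset.range n, gammaRatioFactor c (z + j)
      = ∏ j ∈ Finset.range n, (z + j + 1) ^ c / (z + j) ^ c * ((z + j) / (z + c + j)) :=
        Finset.prod_congr rfl fun j _ ↦ by
          rw [gammaRatioFactor_eq (add_natCast_mem_slitPlane hz j), add_right_comm z (j : ℂ) c]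
    _ = _ := by rw [Finset.prod_mul_distrib, telescope, Finset.prod_div_distrib]

lemma tendsto_add_natCast_add_one_cpow_div (z c : ℂ) :
    Tendsto (fun n : ℕ ↦ (z + (n + 1 : ℕ)) ^ c / (n : ℂ) ^ c) atTop (𝓝 1) := by
  have h := (isBigO_cpow_line_div_sub_one (z + 1) c Complex.one_mem_slitPlane).trans_tendsto
    tendsto_one_div_atTop
  have h1 := (tendsto_sub_nhds_zero_iff.1 h).comp tendsto_natCast_atTop_atTop
  refine h1.congr fun n ↦ ?_
  simp [add_assoc, add_comm (1 : ℂ)]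

lemma tendsto_prod_gammaRatioFactor {z : ℂ} (hz : z ∈ Complex.slitPlane) (c : ℂ) :
    Tendsto (fun n : ℕ ↦ ∏ j ∈ Finset.range (n + 1), gammaRatioFactor c (z + j)) atTop
      (𝓝 (gammaRatio c z)) := by
  have hz0 (n : ℕ) : z + n ≠ 0 := Complex.slitPlane_ne_zero (add_natCast_mem_slitPlane hz n)
  have hGamma : Complex.Gamma z ≠ 0 :=
    Complex.Gamma_ne_zero fun m h ↦ hz0 m (by rw [h, neg_add_cancel])
  have hseq := (((Complex.GammaSeq_tendsto_Gamma (z + c)).div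
    (Complex.GammaSeq_tendsto_Gamma z) hGamma).div_const (z ^ c)).mul
    (tendsto_add_natCast_add_one_cpow_div z c)
  rw [mul_one, div_div] at hseq
  refine hseq.congr' ?_
  filter_upwards [eventually_ne_atTop 0] with n hn
  have hn0 : (n : ℂ) ≠ 0 := Nat.cast_ne_zero.2 hn
  have hfact : (n.factorial : ℂ) ≠ 0 := Nat.cast_ne_zero.2 n.factorial_ne_zero
  have hcpow (w : ℂ) : (n : ℂ) ^ w ≠ 0 := cpow_ne_zero_of_ne_zero hn0 w
  have hquot : Complex.GammaSeq (z + c) n / Complex.GammaSeq z n = (n : ℂ) ^ c *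
      ((∏ j ∈ Finset.range (n + 1), (z + j)) / ∏ j ∈ Finset.range (n + 1), (z + c + j)) := by
    rw [Complex.GammaSeq, Complex.GammaSeq, Complex.cpow_add _ _ hn0, div_div_div_eq]
    field_simp [hcpow z]
  simp only [Pi.div_apply]
  rw [prod_gammaRatioFactor hz, hquot, mul_div_right_comm, div_mul_div_comm, div_mul_eq_mul_div]
  field_simp [hcpow c]

lemma isBigO_gammaRatioFactor_sub_one (c : ℂ) :
    (fun z ↦ gammaRatioFactor c z - 1) =O[cobounded ℂ] fun z ↦ (‖z‖ ^ 2)⁻¹ := by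
  let h : ℂ → ℂ := fun δ ↦ (1 + δ) ^ c / (1 + c * δ)
  have hana : AnalyticAt ℂ h 0 :=
    (AnalyticAt.cpow (by fun_prop) (by fun_prop) (by simp)).div (by fun_prop) (by simp)
  have hderiv : HasDerivAt h 0 0 := by
    have hnum : HasDerivAt (fun δ : ℂ ↦ (1 + δ) ^ c) (c * (1 + 0) ^ (c - 1) * 1) 0 :=
      ((hasDerivAt_id (0 : ℂ)).const_add 1).cpow_const (by simp)
    have hden : HasDerivAt (fun δ : ℂ ↦ 1 + c * δ) (c * 1) 0 :=
      ((hasDerivAt_id (0 : ℂ)).const_mul c).const_add 1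
    exact (hnum.div hden (by simp)).congr_deriv (by simp)
  have hO := (isBigO_sub_linear_of_analyticAt hana).comp_tendsto
    (tendsto_inv₀_cobounded (α := ℂ))
  refine (hO.congr_left fun z ↦ ?_).congr_right fun z ↦ ?_
  · simp only [Function.comp_apply, hderiv.deriv, zero_add, smul_zero, add_zero]
    simp [h, gammaRatioFactor, div_eq_mul_inv]
  · simp

/-- The closed sector `|arg z| ≤ π - arccos δ` around the positive real axis, together with `0`.
It misses the negative real axis as soon as `δ < 1`. -/
def sector (δ : ℝ) : Set ℂ := {z | -(δ * ‖z‖) ≤ z.re}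

lemma mem_slitPlane_of_mem_sector {δ : ℝ} (hδ : δ < 1) {z : ℂ} (hz : z ∈ sector δ)
    (hz0 : z ≠ 0) : z ∈ Complex.slitPlane := by
  rw [Complex.mem_slitPlane_iff, or_iff_not_imp_right, not_not]
  intro him
  have hnorm : ‖z‖ = |z.re| := (Complex.abs_re_eq_norm.2 him).symm
  have hpos : 0 < |z.re| := hnorm ▸ norm_pos_iff.2 hz0
  have hre : -(δ * |z.re|) ≤ z.re := hnorm ▸ hz
  by_contra! hneg
  rw [abs_of_nonpos hneg] at hre hpos
  nlinarith

lemma exists_mul_norm_add_le_norm_add {δ : ℝ} (hδ : δ < 1) :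
    ∃ κ > 0, ∀ z ∈ sector δ, ∀ x : ℝ, 0 ≤ x → κ * (‖z‖ + x) ≤ ‖z + x‖ := by
  set ε : ℝ := max δ 0
  have hε0 : 0 ≤ ε := le_max_right δ 0
  have hε1 : ε < 1 := max_lt hδ one_pos
  refine ⟨(1 - ε) / 2, by linarith, fun z hz x hx ↦ abs_le_of_sq_le_sq' ?_ (norm_nonneg _) |>.2⟩
  have hre : -(ε * ‖z‖) ≤ z.re :=
    (neg_le_neg (mul_le_mul_of_nonneg_right (le_max_left δ 0) (norm_nonneg z))).trans hz
  have hexpand : ‖z + x‖ ^ 2 = ‖z‖ ^ 2 + 2 * x * z.re + x ^ 2 := by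
    simp only [Complex.sq_norm, Complex.normSq_apply, Complex.add_re, Complex.add_im,
      Complex.ofReal_re, Complex.ofReal_im]
    ring
  calc ((1 - ε) / 2 * (‖z‖ + x)) ^ 2
      ≤ (1 - ε) / 2 * (‖z‖ + x) ^ 2 := by
        rw [mul_pow]
        gcongr
        exact pow_le_of_le_one (by linarith) (by linarith) two_ne_zero
    _ ≤ ‖z‖ ^ 2 - 2 * x * (ε * ‖z‖) + x ^ 2 := by
        nlinarith [mul_nonneg (by linarith : 0 ≤ 1 + ε) (sq_nonneg (‖z‖ - x))]
    _ ≤ ‖z + x‖ ^ 2 := by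
        rw [hexpand]
        nlinarith [mul_le_mul_of_nonneg_left hre hx]

lemma eventually_sum_norm_gammaRatioFactor_sub_one_le (c : ℂ) {δ : ℝ} (hδ : δ < 1) :
    ∃ A : ℝ, ∀ᶠ z in cobounded ℂ ⊓ 𝓟 (sector δ), ∀ n : ℕ,
      ∑ j ∈ Finset.range n, ‖gammaRatioFactor c (z + j) - 1‖ ≤ A / ‖z‖ := by
  obtain ⟨C, hC, hO⟩ := (isBigO_gammaRatioFactor_sub_one c).exists_pos
  obtain ⟨R, -, hR⟩ := hasBasis_cobounded_norm.eventually_iff.1 hO.bound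
  obtain ⟨κ, hκ, hsector⟩ := exists_mul_norm_add_le_norm_add hδ
  have hlarge (B : ℝ) : ∀ᶠ z in cobounded ℂ ⊓ 𝓟 (sector δ), B ≤ ‖z‖ :=
    (tendsto_norm_cobounded_atTop.eventually_ge_atTop B).filter_mono inf_le_left
  refine ⟨C / κ ^ 2 * 2, ?_⟩
  filter_upwards [hlarge 2, hlarge (R / κ), mem_inf_of_right (mem_principal_self _)]
    with z h2 hRz hz n
  have term_le (j : ℕ) :
      ‖gammaRatioFactor c (z + j) - 1‖ ≤ C / κ ^ 2 * (1 / (‖z‖ + j) ^ 2) := by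
    have hj : (0 : ℝ) ≤ j := j.cast_nonneg
    have hzj : κ * (‖z‖ + j) ≤ ‖z + j‖ := mod_cast hsector z hz j hj
    have hRzj : R ≤ ‖z + j‖ := by
      rw [div_le_iff₀' hκ] at hRz
      nlinarith
    calc ‖gammaRatioFactor c (z + j) - 1‖
        ≤ C * (‖z + j‖ ^ 2)⁻¹ := by simpa using hR hRzj
      _ ≤ C * ((κ * (‖z‖ + j)) ^ 2)⁻¹ := by gcongr
      _ = C / κ ^ 2 * (1 / (‖z‖ + j) ^ 2) := by
        rw [mul_pow, mul_inv, one_div, div_eq_mul_inv, mul_assoc]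
  calc ∑ j ∈ Finset.range n, ‖gammaRatioFactor c (z + j) - 1‖
      ≤ C / κ ^ 2 * ∑ j ∈ Finset.range n, 1 / (‖z‖ + j) ^ 2 := by
        rw [Finset.mul_sum]
        exact Finset.sum_le_sum fun j _ ↦ term_le j
    _ ≤ C / κ ^ 2 * (2 / ‖z‖) := by gcongr; exact sum_range_one_div_add_sq_le h2 n
    _ = C / κ ^ 2 * 2 / ‖z‖ := (mul_div_assoc _ _ _).symm

lemma isBigO_gammaRatio_sub_one (c : ℂ) {δ : ℝ} (hδ : δ < 1) :
    (fun z ↦ gammaRatio c z - 1) =O[cobounded ℂ ⊓ 𝓟 (sector δ)] fun z ↦ 1 / ‖z‖ := by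
  obtain ⟨A, hA⟩ := eventually_sum_norm_gammaRatioFactor_sub_one_le c hδ
  have hle : ∀ᶠ z in cobounded ℂ ⊓ 𝓟 (sector δ),
      ‖gammaRatio c z - 1‖ ≤ ‖Real.exp (A / ‖z‖) - 1‖ := by
    filter_upwards [hA, (Bornology.eventually_ne_cobounded 0).filter_mono inf_le_left,
      mem_inf_of_right (mem_principal_self _)] with z hsum hz0 hz
    have hlim := tendsto_prod_gammaRatioFactor (mem_slitPlane_of_mem_sector hδ hz hz0) c
    refine le_of_tendsto (hlim.sub_const 1).norm (.of_forall fun n ↦ ?_)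
    have hprod := Finset.norm_prod_one_add_sub_one_le (Finset.range (n + 1))
      fun j : ℕ ↦ gammaRatioFactor c (z + j) - 1
    simp only [add_sub_cancel] at hprod
    refine (hprod.trans ?_).trans (Real.le_norm_self _)
    gcongr
    exact hsum (n + 1)
  have hzero : Tendsto (fun z : ℂ ↦ A / ‖z‖) (cobounded ℂ ⊓ 𝓟 (sector δ)) (𝓝 0) :=
    (tendsto_norm_cobounded_atTop.const_div_atTop A).mono_left inf_le_left
  have hexp := Real.differentiableAt_exp.isBigO_sub.comp_tendsto hzero
  simp only [Function.comp_def, Real.exp_zero, sub_zero] at hexp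
  refine (IsBigO.of_norm_eventuallyLE hle).trans (hexp.norm_left.trans ?_)
  simpa only [mul_one_div] using isBigO_const_mul_self A (fun z : ℂ ↦ 1 / ‖z‖) _

end GammaRatio

section Line

variable {u : ℂ}

lemma tendsto_norm_line (a : ℂ) (hu : u ≠ 0) :
    Tendsto (fun s : ℝ ↦ ‖a + u * s‖) atTop atTop := by
  have hcob : Tendsto (fun s : ℝ ↦ a + u * (s : ℂ)) atTop (cobounded ℂ) :=
    (tendsto_const_add_cobounded a).comp
      ((tendsto_mul_left_cobounded hu).comp (RCLike.tendsto_ofReal_atTop_cobounded ℂ))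
  exact tendsto_norm_cobounded_atTop.comp hcob

lemma tendsto_line_sector (a : ℂ) (hu : u ≠ 0) (hre : 0 ≤ u.re) {δ : ℝ} (hδ : 0 < δ) :
    Tendsto (fun s : ℝ ↦ a + u * s) atTop (cobounded ℂ ⊓ 𝓟 (sector δ)) := by
  have hnorm := tendsto_norm_line a hu
  refine tendsto_inf.2 ⟨tendsto_norm_atTop_iff_cobounded.1 hnorm, tendsto_principal.2 ?_⟩
  filter_upwards [eventually_ge_atTop 0, hnorm.eventually_ge_atTop (-a.re / δ)] with s hs hlarge
  have hz : (a + u * s).re = a.re + u.re * s := by simp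
  rw [div_le_iff₀' hδ] at hlarge
  change -(δ * _) ≤ _
  rw [hz]
  linarith [mul_nonneg hre hs]

lemma isBigO_one_div_norm_line (a : ℂ) (hu : u ≠ 0) :
    (fun s : ℝ ↦ 1 / ‖a + u * s‖) =O[atTop] fun s : ℝ ↦ 1 / s := by
  have hu' : 0 < ‖u‖ := norm_pos_iff.2 hu
  refine .of_bound (2 / ‖u‖) ?_
  filter_upwards [eventually_gt_atTop 0, eventually_ge_atTop (2 * ‖a‖ / ‖u‖)] with s hs hlarge
  have htri : ‖u‖ * s ≤ ‖a + u * s‖ + ‖a‖ := by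
    simpa [abs_of_pos hs] using norm_sub_le (a + u * s) a
  rw [div_le_iff₀' hu'] at hlarge
  have hhalf : ‖u‖ * s / 2 ≤ ‖a + u * s‖ := by linarith
  calc ‖1 / ‖a + u * s‖‖ = 1 / ‖a + u * s‖ := by simp
    _ ≤ 1 / (‖u‖ * s / 2) := one_div_le_one_div_of_le (by positivity) hhalf
    _ = 2 / ‖u‖ * ‖1 / s‖ := by
      rw [Real.norm_of_nonneg (by positivity)]
      field_simp

end Line

section GammaPair

lemma isBigO_exp_div_sin_sub_one :
    (fun z ↦ I * Complex.exp (-(I * z)) / (2 * Complex.sin z) - 1)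
      =O[comap Complex.im atTop] fun z ↦ Complex.exp (2 * I * z) := by
  have hzero : Tendsto (fun z ↦ Complex.exp (2 * I * z)) (comap Complex.im atTop) (𝓝 0) := by
    rw [Complex.tendsto_exp_nhds_zero_iff]
    simpa using (tendsto_comap (f := Complex.im) (x := atTop)).const_mul_atTop two_pos
  have hd : DifferentiableAt ℂ (fun δ : ℂ ↦ (1 - δ)⁻¹) 0 :=
    DifferentiableAt.inv (by fun_prop) (by simp)
  refine (isBigO_comp_sub_one hd (by simp) (isBigO_refl _ _) hzero).congr_left fun z ↦ ?_
  have hexp : Complex.exp (I * z) = Complex.exp (-(I * z)) * Complex.exp (2 * I * z) := by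
    rw [← Complex.exp_add]
    ring_nf
  have hsin : 2 * Complex.sin z =
      I * Complex.exp (-(I * z)) * (1 - Complex.exp (2 * I * z)) := by
    rw [Complex.two_sin, mul_assoc, mul_one_sub, ← hexp]
    ring_nf
  rw [hsin, div_mul_cancel_left₀ (mul_ne_zero Complex.I_ne_zero (Complex.exp_ne_zero _))]

lemma isBigO_exp_two_pi_I_mul_line (a : ℂ) :
    (fun s : ℝ ↦ Complex.exp (2 * I * (Real.pi * (a + I * s)))) =O[atTop]
      fun s : ℝ ↦ 1 / s := by
  have hdecay : (fun s : ℝ ↦ Real.exp (-(2 * Real.pi) * s)) =O[atTop] fun s : ℝ ↦ 1 / s := by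
    simpa [Real.rpow_neg_one] using
      (isLittleO_exp_neg_mul_rpow_atTop Real.two_pi_pos (-1)).isBigO
  refine ((Complex.isBigO_ofReal_left.2 hdecay).const_mul_left
    (Complex.exp (2 * I * Real.pi * a))).congr_left fun s ↦ ?_
  rw [Complex.ofReal_exp, ← Complex.exp_add]
  congr 1
  push_cast
  linear_combination (-2 * Real.pi * s : ℂ) * Complex.I_sq

lemma isBigO_exp_div_sin_line_sub_one (a : ℂ) :
    (fun s : ℝ ↦ I * Complex.exp (-(I * (Real.pi * (a + I * s)))) /
      (2 * Complex.sin (Real.pi * (a + I * s))) - 1) =O[atTop] fun s : ℝ ↦ 1 / s := by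
  have hlim : Tendsto (fun s : ℝ ↦ (Real.pi * (a + I * s) : ℂ)) atTop
      (comap Complex.im atTop) := by
    rw [tendsto_comap_iff]
    simpa [Function.comp_def] using
      (tendsto_atTop_add_const_left atTop a.im tendsto_id).const_mul_atTop Real.pi_pos
  exact (isBigO_exp_div_sin_sub_one.comp_tendsto hlim).trans (isBigO_exp_two_pi_I_mul_line a)

lemma Gamma_ne_zero_of_im_ne_zero {z : ℂ} (hz : z.im ≠ 0) : Complex.Gamma z ≠ 0 :=
  Complex.Gamma_ne_zero fun m h ↦ hz (by simp [h])

lemma Gamma_add_mul_Gamma_one_sub {z : ℂ} (hz : z.im ≠ 0) (c : ℂ) :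
    Complex.Gamma (z + c) * Complex.Gamma (1 - z) =
      gammaRatio c z * z ^ c * (Real.pi / Complex.sin (Real.pi * z)) := by
  have hz0 : z ≠ 0 := fun h ↦ hz (by simp [h])
  have hGamma := Gamma_ne_zero_of_im_ne_zero hz
  have hcpow : z ^ c ≠ 0 := cpow_ne_zero_of_ne_zero hz0 c
  rw [← Complex.Gamma_mul_Gamma_one_sub, gammaRatio]
  field_simp

/-- The leading term of `Γ(a + is) Γ(b - is)` as `s → ∞`. -/
def gammaPairLead (a b : ℂ) (s : ℝ) : ℂ :=
  2 * Real.pi * (s : ℂ) ^ (a + b - 1) * Complex.exp (Real.pi * (I * (a - b) / 2 - s))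

lemma Gamma_mul_Gamma_div_gammaPairLead (a b : ℂ) {s : ℝ} (hb : b.im < s) :
    Complex.Gamma (a + I * s) * Complex.Gamma (b - I * s) / gammaPairLead a b s =
      gammaRatio (a + b - 1) (1 - b + I * s) *
        ((1 - b + I * s) ^ (a + b - 1) / ((s : ℂ) ^ (a + b - 1) * I ^ (a + b - 1))) *
        (I * Complex.exp (-(I * (Real.pi * (1 - b + I * s)))) /
          (2 * Complex.sin (Real.pi * (1 - b + I * s)))) := by
  have him : (1 - b + I * s).im ≠ 0 := by
    simpa using (by linarith : 0 < -b.im + s).ne'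
  have hGamma := Gamma_add_mul_Gamma_one_sub him (a + b - 1)
  have hphase : I ^ (a + b - 1) = I * Complex.exp (-(I * (Real.pi * (1 - b + I * s)))) *
      Complex.exp (Real.pi * (I * (a - b) / 2 - s)) := by
    nth_rw 2 [← Complex.exp_pi_div_two_mul_I]
    rw [I_cpow, ← Complex.exp_add, ← Complex.exp_add]
    congr 1
    linear_combination (Real.pi * s : ℂ) * Complex.I_sq
  have hpi : (Real.pi : ℂ) ≠ 0 := Complex.ofReal_ne_zero.2 Real.pi_ne_zero
  rw [show a + I * s = 1 - b + I * s + (a + b - 1) by ring,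
    show b - I * s = 1 - (1 - b + I * s) by ring, hGamma, gammaPairLead, hphase]
  field_simp

lemma isBigO_Gamma_mul_Gamma_div_gammaPairLead_sub_one (a b : ℂ) :
    (fun s : ℝ ↦ Complex.Gamma (a + I * s) * Complex.Gamma (b - I * s) / gammaPairLead a b s - 1)
      =O[atTop] fun s : ℝ ↦ 1 / s := by
  have hone : (fun s : ℝ ↦ 1 / s) =O[atTop] fun _ ↦ (1 : ℝ) := tendsto_one_div_atTop.isBigO_one ℝ
  have hratio : (fun s : ℝ ↦ gammaRatio (a + b - 1) (1 - b + I * s) - 1) =O[atTop]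
      fun s : ℝ ↦ 1 / s :=
    ((isBigO_gammaRatio_sub_one (a + b - 1) one_half_lt_one).comp_tendsto
      (tendsto_line_sector (1 - b) Complex.I_ne_zero (by simp) one_half_pos)).trans
      (isBigO_one_div_norm_line (1 - b) Complex.I_ne_zero)
  have hcpow := isBigO_cpow_line_div_sub_one (1 - b) (a + b - 1)
    (by simp [Complex.mem_slitPlane_iff] : I ∈ Complex.slitPlane)
  have hsin := isBigO_exp_div_sin_line_sub_one (1 - b)
  refine (isBigO_mul_sub_one (isBigO_mul_sub_one hratio hcpow hone) hsin hone).congr' ?_ .rfl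
  filter_upwards [eventually_gt_atTop b.im] with s hb
  rw [Gamma_mul_Gamma_div_gammaPairLead a b hb]

end GammaPair

section Weight

/-- The leading term of `wfun k₁ k₂ t φ (x + I * y)` as `x → ∞`. -/
def wfunLead (k₁ k₂ t φ : ℝ) (y : ℂ) (x : ℝ) : ℂ :=
  ((2 * Real.pi : ℝ) : ℂ) *
    Complex.exp (((2 * t * (φ - Real.pi) : ℝ) : ℂ) + 4 * I * y * ((φ : ℂ) - Real.pi)) *
    (x : ℂ) ^ ((2 * k₁ + 2 * k₂ - 2 : ℝ) : ℂ) *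
    Complex.exp (((-(4 * (Real.pi - φ) * x) : ℝ) : ℂ))

variable (k₁ k₂ t φ : ℝ)

lemma wfun_add_I_mul (y : ℂ) (x : ℝ) :
    wfun k₁ k₂ t φ (x + I * y) =
      ((1 / (2 * Real.pi) : ℝ) : ℂ) *
        Complex.exp ((2 * (x + I * y) + t) * (2 * φ - Real.pi)) *
        ((Complex.Gamma (k₁ + I * t - y + I * x) * Complex.Gamma (k₁ - I * t + y - I * x)) *
          (Complex.Gamma (k₂ - y + I * x) * Complex.Gamma (k₂ + y - I * x))) := by
  have hmul : I * (x + I * y) = I * x - y := by linear_combination y * Complex.I_sq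
  simp only [wfun, hmul]
  ring_nf

lemma wfunLead_eq (y : ℂ) {x : ℝ} (hx : x ≠ 0) :
    wfunLead k₁ k₂ t φ y x =
      ((1 / (2 * Real.pi) : ℝ) : ℂ) *
        Complex.exp ((2 * (x + I * y) + t) * (2 * φ - Real.pi)) *
        (gammaPairLead (k₁ + I * t - y) (k₁ - I * t + y) x *
          gammaPairLead (k₂ - y) (k₂ + y) x) := by
  have hx0 : (x : ℂ) ≠ 0 := Complex.ofReal_ne_zero.2 hx
  have hpi : (Real.pi : ℂ) ≠ 0 := Complex.ofReal_ne_zero.2 Real.pi_ne_zero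
  have hpow : (x : ℂ) ^ ((2 * k₁ + 2 * k₂ - 2 : ℝ) : ℂ) =
      (x : ℂ) ^ (k₁ + I * t - y + (k₁ - I * t + y) - 1) * (x : ℂ) ^ (k₂ - y + (k₂ + y) - 1) := by
    rw [← Complex.cpow_add _ _ hx0]
    congr 1
    push_cast
    ring
  have hexp : Complex.exp (((2 * t * (φ - Real.pi) : ℝ) : ℂ) + 4 * I * y * ((φ : ℂ) - Real.pi)) *
      Complex.exp (((-(4 * (Real.pi - φ) * x) : ℝ) : ℂ)) =
      Complex.exp ((2 * (x + I * y) + t) * (2 * φ - Real.pi)) *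
        (Complex.exp (Real.pi * (I * (k₁ + I * t - y - (k₁ - I * t + y)) / 2 - x)) *
          Complex.exp (Real.pi * (I * (k₂ - y - (k₂ + y)) / 2 - x))) := by
    simp only [← Complex.exp_add]
    congr 1
    push_cast
    linear_combination (-Real.pi * t : ℂ) * Complex.I_sq
  rw [wfunLead, mul_right_comm, mul_assoc ((2 * Real.pi : ℝ) : ℂ), hexp, hpow,
    gammaPairLead, gammaPairLead]
  push_cast
  field_simp

lemma isBigO_wfun_div_wfunLead_sub_one (y : ℂ) :
    (fun x : ℝ ↦ wfun k₁ k₂ t φ (x + I * y) / wfunLead k₁ k₂ t φ y x - 1) =O[atTop]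
      fun x : ℝ ↦ 1 / x := by
  have hpairs := isBigO_mul_sub_one
    (isBigO_Gamma_mul_Gamma_div_gammaPairLead_sub_one (k₁ + I * t - y) (k₁ - I * t + y))
    (isBigO_Gamma_mul_Gamma_div_gammaPairLead_sub_one (k₂ - y) (k₂ + y))
    (tendsto_one_div_atTop.isBigO_one ℝ)
  refine hpairs.congr' ?_ .rfl
  filter_upwards [eventually_ne_atTop 0] with x hx
  have hprefactor : ((1 / (2 * Real.pi) : ℝ) : ℂ) *
      Complex.exp ((2 * (x + I * y) + t) * (2 * φ - Real.pi)) ≠ 0 :=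
    mul_ne_zero (Complex.ofReal_ne_zero.2 (by positivity)) (Complex.exp_ne_zero _)
  rw [wfun_add_I_mul, wfunLead_eq k₁ k₂ t φ y hx, mul_div_mul_left _ _ hprefactor,
    mul_div_mul_comm]

lemma wfun_neg (z : ℂ) : wfun k₁ k₂ (-t) (Real.pi - φ) (-z) = wfun k₁ k₂ t φ z := by
  simp only [wfun]
  push_cast
  ring_nf

lemma wfunLead_neg_of_neg (y : ℂ) {x : ℝ} (hx : x < 0) :
    wfunLead k₁ k₂ (-t) (Real.pi - φ) (-y) (-x) =
      ((2 * Real.pi : ℝ) : ℂ) * Complex.exp (((2 * φ * t : ℝ) : ℂ) + 4 * I * φ * y) *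
        ((|x| : ℝ) : ℂ) ^ ((2 * k₁ + 2 * k₂ - 2 : ℝ) : ℂ) *
        Complex.exp (((4 * φ * x : ℝ) : ℂ)) := by
  rw [wfunLead, abs_of_neg hx]
  push_cast
  ring_nf

end Weight

theorem weight_asymptotics_general (k₁ k₂ t φ : ℝ) (y : ℂ) :
    ((fun x : ℝ ↦ wfun k₁ k₂ t φ ((x : ℂ) + I * y) /
        (((2 * Real.pi : ℝ) : ℂ) *
          Complex.exp (((2 * t * (φ - Real.pi) : ℝ) : ℂ) + 4 * I * y * ((φ : ℂ) - Real.pi)) *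
          (x : ℂ) ^ ((2 * k₁ + 2 * k₂ - 2 : ℝ) : ℂ) *
          Complex.exp (((-(4 * (Real.pi - φ) * x) : ℝ) : ℂ))) - 1)
      =O[atTop] fun x : ℝ ↦ 1 / x) ∧
    ((fun x : ℝ ↦ wfun k₁ k₂ t φ ((x : ℂ) + I * y) /
        (((2 * Real.pi : ℝ) : ℂ) *
          Complex.exp (((2 * φ * t : ℝ) : ℂ) + 4 * I * φ * y) *
          ((|x| : ℝ) : ℂ) ^ ((2 * k₁ + 2 * k₂ - 2 : ℝ) : ℂ) *
          Complex.exp (((4 * φ * x : ℝ) : ℂ))) - 1)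
      =O[atBot] fun x : ℝ ↦ 1 / x) := by
  refine ⟨isBigO_wfun_div_wfunLead_sub_one k₁ k₂ t φ y, ?_⟩
  have hneg := (isBigO_wfun_div_wfunLead_sub_one k₁ k₂ (-t) (Real.pi - φ) (-y)).comp_tendsto
    tendsto_neg_atBot_atTop
  refine (hneg.congr' ?_ (.of_forall fun x ↦ one_div_neg_eq_neg_one_div x)).of_neg_right
  filter_upwards [eventually_lt_atBot 0] with x hx
  have harg : ((-x : ℝ) : ℂ) + I * -y = -(x + I * y) := by push_cast; ring
  rw [Function.comp_apply, wfunLead_neg_of_neg k₁ k₂ t φ y hx, harg, wfun_neg]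

/-- Asymptotic behaviour of the weight function `w(x+iy)` as `x → ±∞`:
`w(x+iy) = 2π e^{2t(φ−π)+4iy(φ−π)} x^{2k₁+2k₂−2} e^{−4(π−φ)x}(1+O(1/x))` as `x → ∞`, and
`w(x+iy) = 2π e^{2φt+4iφy} |x|^{2k₁+2k₂−2} e^{4φx}(1+O(1/x))` as `x → −∞`. -/
theorem weight_asymptotics (k₁ k₂ : ℝ) (hk₁ : 1 < k₁) (hk₂ : 1 < k₂) (t : ℝ)
    (φ : ℝ) (hφ₀ : 0 < φ) (hφπ : φ < Real.pi) (y : ℝ) (hy : -1 ≤ y) (hy' : y ≤ 1) :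
    ((fun x : ℝ => wfun k₁ k₂ t φ ((x : ℂ) + I * y) /
        (((2 * Real.pi : ℝ) : ℂ) *
          Complex.exp (((2 * t * (φ - Real.pi) : ℝ) : ℂ) + 4 * I * y * ((φ : ℂ) - Real.pi)) *
          (x : ℂ) ^ ((2 * k₁ + 2 * k₂ - 2 : ℝ) : ℂ) *
          Complex.exp (((-(4 * (Real.pi - φ) * x) : ℝ) : ℂ))) - 1)
      =O[atTop] fun x : ℝ => 1 / x) ∧
    ((fun x : ℝ => wfun k₁ k₂ t φ ((x : ℂ) + I * y) /
        (((2 * Real.pi : ℝ) : ℂ) *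
          Complex.exp (((2 * φ * t : ℝ) : ℂ) + 4 * I * φ * (y : ℂ)) *
          ((|x| : ℝ) : ℂ) ^ ((2 * k₁ + 2 * k₂ - 2 : ℝ) : ℂ) *
          Complex.exp (((4 * φ * x : ℝ) : ℂ))) - 1)
      =O[atBot] fun x : ℝ => 1 / x) :=
  weight_asymptotics_general k₁ k₂ t φ y
end
end

section
/- Let k₁, k₂ > 0, t ∈ ℝ, 0 < φ < π. Then (i) the polynomials are dense in L²(ℝ, w(x)dx) (indeed ∫_ℝ e^{ε|x|} w(x) dx < ∞ for 0 < ε < min{4φ, 4(π−φ)}, so the moment problem for w(x)dx is determinate), and (ii) Λ is symmetric on polynomials: for all polynomials p, q with complex coefficients, ∫_ℝ (Λp)(x) conj(q(x)) w(x) dx = ∫_ℝ p(x) conj((Λq)(x)) w(x) dx. Hence Λ with domain the polynomials is a densely defined symmetric operator on L²(ℝ, w(x)dx). -/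
noncomputable section

open MeasureTheory Filter Topology Set Asymptotics ComplexConjugate
open Complex (I)

/-- `α₊(z) = −e^{2iφ}(k₂ − iz)(k₁ − i(t+z))`. -/
def alphaP (k₁ k₂ t φ : ℝ) (z : ℂ) : ℂ :=
  -Complex.exp (2 * I * φ) * ((k₂ : ℂ) - I * z) * ((k₁ : ℂ) - I * ((t : ℂ) + z))

/-- `α₋(z) = −e^{−2iφ}(k₂ + iz)(k₁ + i(t+z))`. -/
def alphaM (k₁ k₂ t φ : ℝ) (z : ℂ) : ℂ :=
  -Complex.exp (-2 * I * φ) * ((k₂ : ℂ) + I * z) * ((k₁ : ℂ) + I * ((t : ℂ) + z))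

/-- `β(z) = k₁(1−k₁) + k₂(1−k₂) − 2(t+z)z`. -/
def betaF (k₁ k₂ t : ℝ) (z : ℂ) : ℂ :=
  (k₁ : ℂ) * (1 - (k₁ : ℂ)) + (k₂ : ℂ) * (1 - (k₂ : ℂ)) - 2 * ((t : ℂ) + z) * z

/-- The difference operator `Λ`. -/
def Lam (k₁ k₂ t φ : ℝ) (g : ℂ → ℂ) (z : ℂ) : ℂ :=
  alphaP k₁ k₂ t φ z * g (z + I) + betaF k₁ k₂ t z * g z + alphaM k₁ k₂ t φ z * g (z - I)

/-- The measure `w(x) dx` on `ℝ`. -/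
def wMeasure (k₁ k₂ t φ : ℝ) : Measure ℝ :=
  volume.withDensity fun x : ℝ => ENNReal.ofReal ((wfun k₁ k₂ t φ (x : ℂ)).re)

/-!
The functional equation of `Γ` gives `α_±(z) w_{k₁,k₂}(z) = w_{k₁+½,k₂+½}(z ± i/2)`. Hence the `α₊`
term of `∫ (Λq) s w` and the `α₋` term of `∫ q (Λs) w` are the integrals of the same holomorphic
function `q(z + i/2) s(z − i/2) w_{k₁+½,k₂+½}(z)` over the lines `Im z = 1/2` and `Im z = −1/2`, so
they agree by a contour shift. The decay this requires, as well as the exponential moments of `w`,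
comes from rotating the ray of integration in Euler's integral for `Γ` by an angle below `π/2`.

A function in `L²(w)` orthogonal to the polynomials has vanishing moments. Expanding `e^{irx}` term
by term, which the exponential moments allow for small `|r|`, shows that its product with `e^{irx}`
has vanishing moments too. Iterating, its Fourier transform vanishes everywhere, not only near `0`.
-/

open scoped Interval

section ContourShift

variable {E : Type*} [NormedAddCommGroup E] {f : ℂ → E} {g : ℝ → ℝ} {a b y : ℝ}

theorem integrable_horizontal_of_norm_le
    (hf : ContinuousOn f (Complex.im ⁻¹' [[a, b]])) (hg : Integrable g)
    (hfg : ∀ z : ℂ, z.im ∈ [[a, b]] → ‖f z‖ ≤ g z.re) (hy : y ∈ [[a, b]]) :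
    Integrable fun x : ℝ => f (x + y * I) := by
  have h_mem (x : ℝ) : (x + y * I : ℂ).im ∈ [[a, b]] := by simpa using hy
  have h_cont : Continuous fun x : ℝ => f (x + y * I) :=
    hf.comp_continuous (by fun_prop) h_mem
  exact hg.mono' h_cont.aestronglyMeasurable (.of_forall fun x => by simpa using hfg _ (h_mem x))

variable [NormedSpace ℂ E]

theorem norm_integral_horizontal_sub_le
    (hf : DifferentiableOn ℂ f (Complex.im ⁻¹' [[a, b]]))
    (hfg : ∀ z : ℂ, z.im ∈ [[a, b]] → ‖f z‖ ≤ g z.re) (T : ℝ) :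
    ‖(∫ x : ℝ in -T..T, f (x + a * I)) - ∫ x : ℝ in -T..T, f (x + b * I)‖ ≤
      (g T + g (-T)) * |b - a| := by
  have h_rect := Complex.integral_boundary_rect_eq_zero_of_differentiableOn f
    (-T + a * I) (T + b * I) (hf.mono fun z hz => by simpa using hz.2)
  have h_side (s : ℝ) : ‖∫ y : ℝ in a..b, f (s + y * I)‖ ≤ g s * |b - a| :=
    intervalIntegral.norm_integral_le_of_norm_le_const fun y hy => by
      simpa using hfg (s + y * I) (by simpa using uIoc_subset_uIcc hy)
  have h_eq : (∫ x : ℝ in -T..T, f (x + a * I)) - (∫ x : ℝ in -T..T, f (x + b * I)) =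
      I • (∫ y : ℝ in a..b, f ((-T : ℝ) + y * I)) - I • ∫ y : ℝ in a..b, f (T + y * I) := by
    simp only [Complex.add_im, Complex.neg_im, Complex.ofReal_im, neg_zero, Complex.re_ofReal_mul,
      Complex.im_ofReal_mul, Complex.I_im, mul_one, Complex.I_re, mul_zero, add_zero, zero_add,
      Complex.add_re, Complex.neg_re, Complex.ofReal_re, Complex.ofReal_neg] at h_rect
    push_cast
    rw [← sub_eq_zero, ← h_rect]
    abel
  calc _ ≤ ‖I • ∫ y : ℝ in a..b, f ((-T : ℝ) + y * I)‖ + ‖I • ∫ y : ℝ in a..b, f (T + y * I)‖ :=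
        h_eq ▸ norm_sub_le _ _
    _ ≤ g (-T) * |b - a| + g T * |b - a| := by
        simpa only [norm_smul, Complex.norm_I, one_mul] using add_le_add (h_side (-T)) (h_side T)
    _ = _ := by ring

theorem integral_horizontal_eq_of_norm_le
    (hf : DifferentiableOn ℂ f (Complex.im ⁻¹' [[a, b]])) (hg : Integrable g)
    (hfg : ∀ z : ℂ, z.im ∈ [[a, b]] → ‖f z‖ ≤ g z.re) :
    ∫ x : ℝ, f (x + a * I) = ∫ x : ℝ, f (x + b * I) := by
  have hfa := integrable_horizontal_of_norm_le hf.continuousOn hg hfg left_mem_uIcc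
  have hfb := integrable_horizontal_of_norm_le hf.continuousOn hg hfg right_mem_uIcc
  let D : ℝ → E := fun T =>
    (∫ x : ℝ in -T..T, f (x + a * I)) - ∫ x : ℝ in -T..T, f (x + b * I)
  have h_cont {u : ℝ → E} (hu : Integrable u) : Continuous fun T : ℝ => ∫ x in -T..T, u x := by
    have h_prim := intervalIntegral.continuous_primitive (fun _ _ => hu.intervalIntegrable) 0
    refine (h_prim.sub (h_prim.comp continuous_neg)).congr fun T => ?_
    exact intervalIntegral.integral_interval_sub_left hu.intervalIntegrable hu.intervalIntegrable
  have hD_int : Integrable D :=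
    ((hg.add hg.comp_neg).mul_const |b - a|).mono'
      ((h_cont hfa).sub (h_cont hfb)).aestronglyMeasurable
      (.of_forall (norm_integral_horizontal_sub_le hf hfg))
  have hD_lim : Tendsto D atTop (𝓝 ((∫ x : ℝ, f (x + a * I)) - ∫ x : ℝ, f (x + b * I))) :=
    (intervalIntegral_tendsto_integral hfa tendsto_neg_atTop_atBot tendsto_id).sub
      (intervalIntegral_tendsto_integral hfb tendsto_neg_atTop_atBot tendsto_id)
  -- The vertical sides are small only on average, but an integrable function can only tend to `0`.
  refine sub_eq_zero.1 (IntegrableAtFilter.eq_zero_of_tendsto (hD_int.integrableAtFilter _)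
    (fun s hs => ?_) hD_lim)
  obtain ⟨T, hT⟩ := mem_atTop_sets.1 hs
  exact measure_mono_top hT Real.volume_Ici

end ContourShift

section GammaDecay

theorem integral_Ioi_zero_eq_integral_exp_smul {E : Type*} [NormedAddCommGroup E]
    [NormedSpace ℝ E] (g : ℝ → E) :
    ∫ x in Ioi (0 : ℝ), g x = ∫ x : ℝ, Real.exp x • g (Real.exp x) := by
  simpa only [image_univ, Real.range_exp, setIntegral_univ, abs_of_pos (Real.exp_pos _)] using
    integral_image_eq_integral_abs_deriv_smul (s := univ) MeasurableSet.univ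
      (fun x _ => (Real.hasDerivAt_exp x).hasDerivWithinAt) Real.exp_injective.injOn g

theorem integral_exp_mul_sub_mul_exp {s c : ℝ} (hs : 0 < s) (hc : 0 < c) :
    ∫ x : ℝ, Real.exp (s * x - c * Real.exp x) = (1 / c) ^ s * Real.Gamma s := by
  rw [← Real.integral_rpow_mul_exp_neg_mul_Ioi hs hc, integral_Ioi_zero_eq_integral_exp_smul]
  refine integral_congr_ae (.of_forall fun x => ?_)
  simp only [smul_eq_mul, ← Real.exp_mul, ← Real.exp_add]
  congr 1
  ring

theorem integrable_exp_mul_sub_mul_exp {s c : ℝ} (hs : 0 < s) (hc : 0 < c) :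
    Integrable fun x : ℝ => Real.exp (s * x - c * Real.exp x) := by
  refine .of_integral_ne_zero ?_
  rw [integral_exp_mul_sub_mul_exp hs hc]
  have := Real.Gamma_pos_of_pos hs
  positivity

theorem Gamma_eq_integral_cexp {a : ℂ} (ha : 0 < a.re) :
    Complex.Gamma a = ∫ x : ℝ, Complex.exp (a * x - Complex.exp x) := by
  rw [Complex.Gamma_eq_integral ha, Complex.GammaIntegral, integral_Ioi_zero_eq_integral_exp_smul]
  refine integral_congr_ae (.of_forall fun x => ?_)
  have h_cpow : (Real.exp x : ℂ) ^ (a - 1) = Complex.exp (x * (a - 1)) := by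
    rw [Complex.cpow_def_of_ne_zero (by simp), ← Complex.ofReal_log (Real.exp_pos x).le,
      Real.log_exp]
  simp only [h_cpow, Complex.real_smul]
  simp only [Complex.ofReal_exp, Complex.ofReal_neg, ← Complex.exp_add]
  congr 1
  ring

theorem norm_cexp_mul_sub_cexp (a z : ℂ) :
    ‖Complex.exp (a * z - Complex.exp z)‖ =
      Real.exp (a.re * z.re - a.im * z.im - Real.exp z.re * Real.cos z.im) := by
  rw [Complex.norm_exp, Complex.sub_re, Complex.mul_re, Complex.exp_re]

theorem norm_cexp_mul_sub_cexp_le (a : ℂ) {z : ℂ} {θ : ℝ} (hθ : |θ| ≤ Real.pi)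
    (hz : |z.im| ≤ |θ|) :
    ‖Complex.exp (a * z - Complex.exp z)‖ ≤
      Real.exp (|a.im| * |θ|) * Real.exp (a.re * z.re - Real.cos θ * Real.exp z.re) := by
  have h_im : -(a.im * z.im) ≤ |a.im| * |θ| := (neg_le_abs _).trans (by rw [abs_mul]; gcongr)
  have h_cos : Real.cos θ ≤ Real.cos z.im := by
    rw [← Real.cos_abs θ, ← Real.cos_abs z.im]
    exact Real.cos_le_cos_of_nonneg_of_le_pi (abs_nonneg _) hθ hz
  rw [norm_cexp_mul_sub_cexp, ← Real.exp_add]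
  gcongr
  nlinarith [Real.exp_pos z.re]

/- Rotating the ray of integration in Euler's integral by the angle `θ` turns the oscillation of
`Γ` along vertical lines into exponential decay. -/
theorem norm_Gamma_le_mul_exp {a : ℂ} (ha : 0 < a.re) {θ : ℝ} (hθ : |θ| < Real.pi / 2) :
    ‖Complex.Gamma a‖ ≤
      (1 / Real.cos θ) ^ a.re * Real.Gamma a.re * Real.exp (-θ * a.im) := by
  have h_cos : 0 < Real.cos θ := Real.cos_pos_of_mem_Ioo (abs_lt.1 hθ)
  let f : ℂ → ℂ := fun z => Complex.exp (a * z - Complex.exp z)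
  let g : ℝ → ℝ := fun x => Real.exp (a.re * x - Real.cos θ * Real.exp x)
  have h_dom (z : ℂ) (hz : z.im ∈ [[0, θ]]) : ‖f z‖ ≤ Real.exp (|a.im| * |θ|) * g z.re :=
    norm_cexp_mul_sub_cexp_le a (by linarith [Real.pi_pos])
      (by simpa using abs_sub_left_of_mem_uIcc hz)
  have h_rotate : Complex.Gamma a = ∫ x : ℝ, f (x + θ * I) := by
    rw [Gamma_eq_integral_cexp ha,
      ← integral_horizontal_eq_of_norm_le (f := f) (a := 0) (by fun_prop)
        ((integrable_exp_mul_sub_mul_exp ha h_cos).const_mul _) h_dom]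
    simp [f]
  calc ‖Complex.Gamma a‖ ≤ ∫ x : ℝ, ‖f (x + θ * I)‖ :=
        h_rotate ▸ norm_integral_le_integral_norm _
    _ = ∫ x : ℝ, g x * Real.exp (-θ * a.im) := by
        refine integral_congr_ae (.of_forall fun x => ?_)
        simp only [f, g, norm_cexp_mul_sub_cexp, ← Real.exp_add]
        congr 1
        simp only [Complex.add_re, Complex.ofReal_re, Complex.add_im, Complex.ofReal_im,
          Complex.re_ofReal_mul, Complex.im_ofReal_mul, Complex.I_re, Complex.I_im,
          mul_zero, mul_one, add_zero, zero_add]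
        ring
    _ = _ := by rw [integral_mul_const, integral_exp_mul_sub_mul_exp ha h_cos]

theorem exists_norm_Gamma_le_mul_exp_neg_abs_im {a b θ : ℝ} (ha : 0 < a)
    (hθ : |θ| < Real.pi / 2) :
    ∃ C, ∀ z : ℂ, z.re ∈ Icc a b → ‖Complex.Gamma z‖ ≤ C * Real.exp (-θ * |z.im|) := by
  have h_cont : ContinuousOn (fun s : ℝ => (1 / Real.cos θ) ^ s * Real.Gamma s) (Icc a b) := by
    have h_cos : 0 < Real.cos θ := Real.cos_pos_of_mem_Ioo (abs_lt.1 hθ)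
    refine (Real.continuous_const_rpow (by positivity)).continuousOn.mul fun s hs => ?_
    have h_ne (m : ℕ) : s ≠ -m := by
      have : (0 : ℝ) ≤ m := m.cast_nonneg
      linarith [hs.1]
    exact (Real.differentiableAt_Gamma h_ne).continuousAt.continuousWithinAt
  obtain ⟨C, hC⟩ := isCompact_Icc.exists_bound_of_continuousOn h_cont
  refine ⟨C, fun z hz => ?_⟩
  have h_re : 0 < z.re := ha.trans_le hz.1
  have h_norm : ‖Complex.Gamma z‖ ≤
      (1 / Real.cos θ) ^ z.re * Real.Gamma z.re * Real.exp (-θ * |z.im|) := by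
    rcases abs_cases z.im with ⟨h, -⟩ | ⟨h, -⟩
    · simpa only [h] using norm_Gamma_le_mul_exp h_re hθ
    · simpa only [h, mul_neg, neg_mul, neg_neg, Real.cos_neg] using
        norm_Gamma_le_mul_exp h_re (θ := -θ) (by rwa [abs_neg])
  refine h_norm.trans ?_
  gcongr
  exact (le_abs_self _).trans (hC _ hz)

end GammaDecay

section ExponentialGrowth

theorem pow_le_mul_exp {δ x : ℝ} (hδ : 0 < δ) (hx : 0 ≤ x) (n : ℕ) :
    x ^ n ≤ n.factorial / δ ^ n * Real.exp (δ * x) := by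
  have h := Real.pow_div_factorial_le_exp (δ * x) (by positivity) n
  rw [div_le_iff₀ (by positivity), mul_pow] at h
  rw [div_mul_eq_mul_div, le_div_iff₀ (by positivity)]
  linarith

theorem pow_mul_exp_le_mul_exp {γ δ x : ℝ} (hγδ : γ < δ) (hx : 0 ≤ x) (n : ℕ) :
    x ^ n * Real.exp (γ * x) ≤ n.factorial / (δ - γ) ^ n * Real.exp (δ * x) :=
  calc x ^ n * Real.exp (γ * x)
      ≤ n.factorial / (δ - γ) ^ n * Real.exp ((δ - γ) * x) * Real.exp (γ * x) := by
        gcongr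
        exact pow_le_mul_exp (sub_pos.2 hγδ) hx n
    _ = n.factorial / (δ - γ) ^ n * Real.exp (δ * x) := by
        rw [mul_assoc, ← Real.exp_add]
        ring_nf

theorem exists_norm_eval_le_mul_exp (q : Polynomial ℂ) {δ : ℝ} (hδ : 0 < δ) :
    ∃ C, ∀ z : ℂ, ‖q.eval z‖ ≤ C * Real.exp (δ * ‖z‖) := by
  induction q using Polynomial.induction_on' with
  | add p q hp hq =>
    obtain ⟨C, hC⟩ := hp
    obtain ⟨D, hD⟩ := hq
    refine ⟨C + D, fun z => ?_⟩
    rw [Polynomial.eval_add, add_mul]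
    exact (norm_add_le _ _).trans (add_le_add (hC z) (hD z))
  | monomial n a =>
    refine ⟨‖a‖ * (n.factorial / δ ^ n), fun z => ?_⟩
    rw [Polynomial.eval_monomial, norm_mul, norm_pow, mul_assoc]
    gcongr
    exact pow_le_mul_exp hδ (norm_nonneg z) n

theorem integrable_exp_neg_mul_abs {δ : ℝ} (hδ : 0 < δ) :
    Integrable fun x : ℝ => Real.exp (-δ * |x|) := by
  refine .of_integral_ne_zero ?_
  rw [integral_comp_abs (f := fun x => Real.exp (-δ * x)), integral_exp_mul_Ioi (by linarith)]
  simp [hδ.ne']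

end ExponentialGrowth

section Determinacy

open scoped FourierTransform

theorem ae_eq_zero_of_vectorFourierIntegral_eq_zero {V E : Type*} [NormedAddCommGroup V]
    [InnerProductSpace ℝ V] [FiniteDimensional ℝ V] [MeasurableSpace V] [BorelSpace V]
    [NormedAddCommGroup E] [NormedSpace ℂ E] [CompleteSpace E] {μ : Measure V} [SigmaFinite μ]
    {f : V → E} (hf : Integrable f μ)
    (h_zero : ∀ ξ, VectorFourier.fourierIntegral 𝐞 μ (innerₗ V) f ξ = 0) : f =ᵐ[μ] 0 := by
  refine ae_eq_zero_of_integral_contDiff_smul_eq_zero hf.locallyIntegrable fun g hg hg' => ?_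
  let G : SchwartzMap V ℂ :=
    (hg'.comp_left (g := Complex.ofRealCLM) rfl).toSchwartzMap (by fun_prop)
  let H : SchwartzMap V ℂ := 𝓕⁻ G
  have h_inv (x : V) : 𝓕 (⇑H) x = (g x : ℂ) := by
    rw [← SchwartzMap.fourier_coe, FourierTransform.fourier_fourierInv_eq]
    rfl
  calc ∫ x, g x • f x ∂μ = ∫ x, 𝓕 (⇑H) x • f x ∂μ := by simp only [h_inv, Complex.coe_smul]
    _ = ∫ ξ, H ξ • VectorFourier.fourierIntegral 𝐞 μ (innerₗ V) f ξ := by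
        have := VectorFourier.integral_bilin_fourierIntegral_eq_flip (L := innerₗ V)
          (ContinuousLinearMap.lsmul ℂ ℂ (E := E)).flip Real.continuous_fourierChar
          continuous_inner hf H.integrable (ν := volume)
        rw [flip_innerₗ] at this
        exact this.symm
    _ = 0 := by simp only [h_zero, smul_zero, integral_zero]

variable {E : Type*} [NormedAddCommGroup E] [NormedSpace ℂ E] {μ : Measure ℝ} {f : ℝ → E} {δ : ℝ}

theorem integrable_smul_of_norm_le_mul_exp
    (hf : Integrable (fun x => Real.exp (δ * |x|) • f x) μ) {u : ℝ → ℂ} (hu : Continuous u)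
    {C : ℝ} (huC : ∀ x, ‖u x‖ ≤ C * Real.exp (δ * |x|)) : Integrable (fun x => u x • f x) μ := by
  have h_bdd : ∀ x, ‖u x * (Real.exp (-(δ * |x|)) : ℝ)‖ ≤ C := fun x => by
    rw [norm_mul, Complex.norm_real, Real.norm_of_nonneg (Real.exp_nonneg _), Real.exp_neg,
      ← div_eq_mul_inv, div_le_iff₀ (Real.exp_pos _)]
    exact huC x
  refine (hf.bdd_smul C (Continuous.aestronglyMeasurable (by fun_prop))
    (.of_forall h_bdd)).congr (.of_forall fun x => ?_)
  rw [Pi.smul_apply', mul_smul, Complex.coe_smul, smul_smul (Real.exp _), ← Real.exp_add,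
    neg_add_cancel, Real.exp_zero, one_smul]

theorem integrable_of_integrable_exp_mul_abs_smul
    (hf : Integrable (fun x => Real.exp (δ * |x|) • f x) μ) (hδ : 0 ≤ δ) : Integrable f μ := by
  simpa using integrable_smul_of_norm_le_mul_exp hf (u := 1) continuous_one (C := 1)
    fun x => by simpa using Real.one_le_exp (by positivity : 0 ≤ δ * |x|)

theorem integrable_exp_smul_cexp_smul (hf : Integrable (fun x => Real.exp (δ * |x|) • f x) μ)
    (s : ℝ) : Integrable (fun x : ℝ => Real.exp (δ * |x|) • Complex.exp (s * x * I) • f x) μ := by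
  simp only [smul_comm (Real.exp _)]
  refine hf.bdd_smul 1 (Continuous.aestronglyMeasurable (by fun_prop)) (.of_forall fun x => ?_)
  simpa using (Complex.norm_exp_ofReal_mul_I (s * x)).le

theorem integrable_exp_mul_pow_smul (hf : Integrable (fun x => Real.exp (δ * |x|) • f x) μ)
    {γ : ℝ} (hγδ : γ < δ) (n : ℕ) :
    Integrable (fun x : ℝ => ((Real.exp (γ * |x|) : ℝ) * (x : ℂ) ^ n) • f x) μ := by
  refine integrable_smul_of_norm_le_mul_exp hf (by fun_prop)
    (C := n.factorial / (δ - γ) ^ n) fun x => ?_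
  rw [norm_mul, norm_pow, Complex.norm_real, Complex.norm_real, Real.norm_eq_abs,
    Real.norm_eq_abs, Real.abs_exp, mul_comm]
  exact pow_mul_exp_le_mul_exp hγδ (abs_nonneg x) n

theorem integral_pow_smul_cexp_smul_eq_zero
    (hf : Integrable (fun x => Real.exp (δ * |x|) • f x) μ)
    (h_mom : ∀ n : ℕ, ∫ x : ℝ, (x : ℂ) ^ n • f x ∂μ = 0) {r : ℝ} (hr : |r| < δ) (n : ℕ) :
    ∫ x : ℝ, (x : ℂ) ^ n • Complex.exp (r * x * I) • f x ∂μ = 0 := by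
  let F : ℕ → ℝ → E := fun m x => ((r * x * I) ^ m / m.factorial : ℂ) • (x : ℂ) ^ n • f x
  have hF_sum (x : ℝ) :
      HasSum (fun m => F m x) ((x : ℂ) ^ n • Complex.exp (r * x * I) • f x) := by
    rw [smul_comm, Complex.exp_eq_exp_ℂ]
    exact (NormedSpace.expSeries_div_hasSum_exp (r * x * I : ℂ)).smul_const _
  have hF_norm_sum (x : ℝ) :
      HasSum (fun m => ‖F m x‖) (‖((Real.exp (|r| * |x|) : ℝ) * (x : ℂ) ^ n) • f x‖) := by
    simp only [F, norm_smul, norm_mul, norm_div, norm_pow, Complex.norm_real, Complex.norm_I,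
      Complex.norm_natCast, Real.norm_eq_abs, mul_one, mul_assoc, Real.abs_exp]
    rw [Real.exp_eq_exp_ℝ]
    exact (NormedSpace.expSeries_div_hasSum_exp (|r| * |x|)).mul_right _
  have hf_meas : AEStronglyMeasurable f μ :=
    (integrable_of_integrable_exp_mul_abs_smul hf ((abs_nonneg r).trans hr.le)).1
  have hF_meas (m : ℕ) : AEStronglyMeasurable (F m) μ :=
    (Continuous.aestronglyMeasurable (by fun_prop)).smul
      ((Continuous.aestronglyMeasurable (by fun_prop)).smul hf_meas)
  have h_sum := hasSum_integral_of_dominated_convergence (fun m x => ‖F m x‖) hF_meas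
    (fun _ => .of_forall fun _ => le_rfl) (.of_forall fun x => (hF_norm_sum x).summable)
    (by simpa only [(hF_norm_sum _).tsum_eq] using
      (integrable_exp_mul_pow_smul hf hr n).norm)
    (.of_forall hF_sum)
  refine h_sum.unique ?_
  have h_term (m : ℕ) : ∫ x, F m x ∂μ = 0 := by
    calc ∫ x, F m x ∂μ
        = ∫ x : ℝ, ((r * I) ^ m / m.factorial : ℂ) • (x : ℂ) ^ (m + n) • f x ∂μ := by
          refine integral_congr_ae (.of_forall fun x => ?_)
          simp only [F, smul_smul]
          congr 1
          ring
      _ = 0 := by rw [integral_smul, h_mom, smul_zero]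
  simp only [h_term, hasSum_zero]

theorem integral_cexp_smul_eq_zero (hf : Integrable (fun x => Real.exp (δ * |x|) • f x) μ)
    (hδ : 0 < δ) (h_mom : ∀ n : ℕ, ∫ x : ℝ, (x : ℂ) ^ n • f x ∂μ = 0) (s : ℝ) :
    ∫ x : ℝ, Complex.exp (s * x * I) • f x ∂μ = 0 := by
  obtain ⟨m, hm⟩ := exists_nat_gt (|s| / δ)
  have hm₀ : 0 < (m : ℝ) := (div_nonneg (abs_nonneg s) hδ.le).trans_lt hm
  have hr : |s / m| < δ := by
    rw [abs_div, abs_of_pos hm₀]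
    exact (div_lt_comm₀ hδ hm₀).1 hm
  have h_steps (j n : ℕ) :
      ∫ x : ℝ, (x : ℂ) ^ n • Complex.exp ((j * (s / m) : ℝ) * x * I) • f x ∂μ = 0 := by
    induction j generalizing n with
    | zero => simpa using h_mom n
    | succ j ih =>
      have h_exp (x : ℝ) : Complex.exp (((j + 1 : ℕ) * (s / m) : ℝ) * x * I) =
          Complex.exp ((s / m : ℝ) * x * I) * Complex.exp ((j * (s / m) : ℝ) * x * I) := by
        rw [← Complex.exp_add]
        push_cast
        ring_nf
      simp only [h_exp, mul_smul]
      exact integral_pow_smul_cexp_smul_eq_zero (integrable_exp_smul_cexp_smul hf _) ih hr n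
  simpa [mul_div_cancel₀ _ hm₀.ne'] using h_steps m 0

theorem ae_eq_zero_of_forall_moment_eq_zero [CompleteSpace E] [SigmaFinite μ]
    (hf : Integrable (fun x => Real.exp (δ * |x|) • f x) μ)
    (hδ : 0 < δ) (h_mom : ∀ n : ℕ, ∫ x : ℝ, (x : ℂ) ^ n • f x ∂μ = 0) : f =ᵐ[μ] 0 := by
  have hf_int := integrable_of_integrable_exp_mul_abs_smul hf hδ.le
  refine ae_eq_zero_of_vectorFourierIntegral_eq_zero hf_int fun ξ => ?_
  rw [← integral_cexp_smul_eq_zero hf hδ h_mom (-2 * Real.pi * ξ)]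
  refine integral_congr_ae (.of_forall fun x => ?_)
  simp only [Circle.smul_def, Real.fourierChar_apply, innerₗ_apply_apply, RCLike.inner_apply,
    conj_trivial]
  congr 2
  push_cast
  ring

end Determinacy

section Density

variable {μ : Measure ℝ} {ε : ℝ}

/-- The subspace of `L²(μ)` of the classes that are represented by complex polynomials. -/
def polynomialSubmodule (μ : Measure ℝ) : Submodule ℂ (Lp ℂ 2 μ) where
  carrier := {u | ∃ q : Polynomial ℂ, ∀ᵐ x ∂μ, u x = q.eval (x : ℂ)}
  add_mem' := by
    rintro u v ⟨p, hp⟩ ⟨q, hq⟩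
    refine ⟨p + q, ?_⟩
    filter_upwards [hp, hq, Lp.coeFn_add u v] with x hux hvx h_add
    rw [h_add, Pi.add_apply, hux, hvx, Polynomial.eval_add]
  zero_mem' := ⟨0, by simp only [Polynomial.eval_zero]; exact Lp.coeFn_zero ℂ 2 μ⟩
  smul_mem' := by
    rintro c u ⟨p, hp⟩
    refine ⟨c • p, ?_⟩
    filter_upwards [hp, Lp.coeFn_smul c u] with x hux h_smul
    rw [h_smul, Pi.smul_apply, hux, Polynomial.eval_smul]

theorem isFiniteMeasure_of_integrable_exp_mul_abs (hε : 0 ≤ ε)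
    (hμ : Integrable (fun x : ℝ => Real.exp (ε * |x|)) μ) : IsFiniteMeasure μ := by
  have h_one : Integrable (fun _ => (1 : ℝ)) μ :=
    hμ.mono' aestronglyMeasurable_const
      (.of_forall fun x => by simpa using Real.one_le_exp (by positivity : 0 ≤ ε * |x|))
  simpa [integrable_const_iff] using h_one

theorem memLp_two_exp_half_mul_abs (hμ : Integrable (fun x : ℝ => Real.exp (ε * |x|)) μ) :
    MemLp (fun x : ℝ => Real.exp (ε / 2 * |x|)) 2 μ := by
  rw [memLp_two_iff_integrable_sq (by fun_prop)]
  refine hμ.congr (.of_forall fun x => ?_)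
  simp only [← Real.exp_nat_mul]
  ring_nf

theorem memLp_two_pow (hε : 0 < ε) (hμ : Integrable (fun x : ℝ => Real.exp (ε * |x|)) μ)
    (n : ℕ) : MemLp (fun x : ℝ => (x : ℂ) ^ n) 2 μ := by
  refine ((memLp_two_exp_half_mul_abs hμ).const_mul (n.factorial / (ε / 2) ^ n)).mono
    (Continuous.aestronglyMeasurable (by fun_prop)) (.of_forall fun x => ?_)
  rw [norm_pow, Complex.norm_real]
  exact (pow_le_mul_exp (half_pos hε) (norm_nonneg x) n).trans (le_abs_self _)

theorem topologicalClosure_polynomialSubmodule (hε : 0 < ε)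
    (hμ : Integrable (fun x : ℝ => Real.exp (ε * |x|)) μ) :
    (polynomialSubmodule μ).topologicalClosure = ⊤ := by
  rw [Submodule.topologicalClosure_eq_top_iff, Submodule.eq_bot_iff]
  intro f hf
  have h_finite := isFiniteMeasure_of_integrable_exp_mul_abs hε.le hμ
  have h_moment (n : ℕ) : ∫ x : ℝ, (x : ℂ) ^ n • f x ∂μ = 0 := by
    have h_pow := memLp_two_pow hε hμ n
    have h_mem : h_pow.toLp _ ∈ polynomialSubmodule μ :=
      ⟨Polynomial.X ^ n, by
        simp only [Polynomial.eval_pow, Polynomial.eval_X]; exact h_pow.coeFn_toLp⟩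
    rw [← (polynomialSubmodule μ).inner_right_of_mem_orthogonal h_mem hf, L2.inner_def]
    refine integral_congr_ae ?_
    filter_upwards [h_pow.coeFn_toLp] with x hx
    simp [hx, mul_comm]
  have h_int : Integrable (fun x => Real.exp (ε / 2 * |x|) • f x) μ :=
    memLp_one_iff_integrable.1 ((Lp.memLp f).smul (memLp_two_exp_half_mul_abs hμ))
  exact (Lp.eq_zero_iff_ae_eq_zero).2
    (ae_eq_zero_of_forall_moment_eq_zero h_int (half_pos hε) h_moment)

end Density

section Weight

/-- The product `Γ(k + iz) Γ(k − iz)`; the weight is an exponential times one such factor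
for `k₁`, taken at `t + z`, and one for `k₂`, taken at `z`. -/
def gammaPair (k : ℝ) (z : ℂ) : ℂ :=
  Complex.Gamma (k + I * z) * Complex.Gamma (k - I * z)

variable {k : ℝ} {z : ℂ}

theorem differentiableAt_Gamma_of_re_pos {a : ℂ} (ha : 0 < a.re) :
    DifferentiableAt ℂ Complex.Gamma a := by
  refine Complex.differentiableAt_Gamma _ fun m h_eq => ?_
  rw [h_eq, Complex.neg_re, Complex.natCast_re] at ha
  linarith [m.cast_nonneg (α := ℝ)]

theorem differentiableAt_gammaPair (hz : |z.im| < k) : DifferentiableAt ℂ (gammaPair k) z := by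
  obtain ⟨h_neg, h_pos⟩ := abs_lt.1 hz
  have h₁ := differentiableAt_Gamma_of_re_pos (a := k + I * z) (by simpa using h_pos)
  have h₂ := differentiableAt_Gamma_of_re_pos (a := k - I * z)
    (by simpa [← neg_lt_iff_pos_add'] using h_neg)
  exact (h₁.comp z (f := fun z => k + I * z) (by fun_prop)).mul
    (h₂.comp z (f := fun z => k - I * z) (by fun_prop))

theorem exists_norm_gammaPair_le {h θ : ℝ} (hk : h < k) (hθ : |θ| < Real.pi / 2) :
    ∃ C, 0 ≤ C ∧
      ∀ z : ℂ, |z.im| ≤ h → ‖gammaPair k z‖ ≤ C * Real.exp (-(2 * θ) * |z.re|) := by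
  obtain ⟨C, hC⟩ := exists_norm_Gamma_le_mul_exp_neg_abs_im (b := k + h) (sub_pos.2 hk) hθ
  refine ⟨C * C, mul_self_nonneg C, fun z hz => ?_⟩
  obtain ⟨h_neg, h_pos⟩ := abs_le.1 hz
  have h_re_add : (k + I * z : ℂ).re = k - z.im := by simp [sub_eq_add_neg]
  have h_re_sub : (k - I * z : ℂ).re = k + z.im := by simp
  have h₁ := hC (k + I * z) ⟨by linarith, by linarith⟩
  have h₂ := hC (k - I * z) ⟨by linarith, by linarith⟩
  simp only [Complex.add_im, Complex.sub_im, Complex.ofReal_im, Complex.I_mul_im, zero_add,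
    zero_sub, abs_neg] at h₁ h₂
  calc ‖gammaPair k z‖ ≤ C * Real.exp (-θ * |z.re|) * (C * Real.exp (-θ * |z.re|)) := by
        rw [gammaPair, norm_mul]
        exact mul_le_mul h₁ h₂ (norm_nonneg _) ((norm_nonneg _).trans h₁)
    _ = C * C * Real.exp (-θ * |z.re| + -θ * |z.re|) := by rw [Real.exp_add]; ring
    _ = C * C * Real.exp (-(2 * θ) * |z.re|) := by ring_nf

theorem conj_gammaPair (k : ℝ) (z : ℂ) : conj (gammaPair k z) = gammaPair k (conj z) := by
  simp [gammaPair, ← Complex.Gamma_conj, mul_comm, sub_eq_add_neg]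

theorem gammaPair_add_half (hz : (k : ℂ) - I * z ≠ 0) :
    gammaPair (k + 1 / 2) (z + I / 2) = (k - I * z) * gammaPair k z := by
  have h_add : ((k + 1 / 2 : ℝ) : ℂ) + I * (z + I / 2) = k + I * z := by
    push_cast
    linear_combination (1 / 2) * Complex.I_mul_I
  have h_sub : ((k + 1 / 2 : ℝ) : ℂ) - I * (z + I / 2) = k - I * z + 1 := by
    push_cast
    linear_combination (-1 / 2) * Complex.I_mul_I
  rw [gammaPair, h_add, h_sub, Complex.Gamma_add_one _ hz, gammaPair]
  ring

variable {k₁ k₂ t φ : ℝ}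

theorem wfun_eq_mul_gammaPair (k₁ k₂ t φ : ℝ) (z : ℂ) :
    wfun k₁ k₂ t φ z = ((1 / (2 * Real.pi) : ℝ) : ℂ) *
      Complex.exp ((2 * z + t) * (2 * φ - Real.pi)) * gammaPair k₁ (t + z) * gammaPair k₂ z := by
  simp only [wfun, gammaPair, mul_add, ← sub_sub, ← add_assoc, ← mul_assoc]

theorem differentiableAt_wfun (h₁ : |z.im| < k₁) (h₂ : |z.im| < k₂) :
    DifferentiableAt ℂ (wfun k₁ k₂ t φ) z := by
  have h_pair₁ : DifferentiableAt ℂ (fun z => gammaPair k₁ (t + z)) z :=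
    (differentiableAt_gammaPair (by simpa using h₁)).comp z (by fun_prop)
  have h_pair₂ := differentiableAt_gammaPair h₂
  rw [funext (wfun_eq_mul_gammaPair k₁ k₂ t φ)]
  fun_prop

theorem norm_cexp_two_mul_add_mul_le (t c : ℝ) (z : ℂ) :
    ‖Complex.exp ((2 * z + t) * c)‖ ≤ Real.exp (|t| * |c|) * Real.exp (2 * |c| * |z.re|) := by
  have h_re : ((2 * z + t) * c : ℂ).re = 2 * (z.re * c) + t * c := by
    rw [Complex.re_mul_ofReal]
    simp only [Complex.add_re, Complex.mul_re, Complex.re_ofNat, Complex.im_ofNat, zero_mul,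
      sub_zero, Complex.ofReal_re]
    ring
  have h_z : z.re * c ≤ |z.re| * |c| := (le_abs_self _).trans_eq (abs_mul _ _)
  have h_t : t * c ≤ |t| * |c| := (le_abs_self _).trans_eq (abs_mul _ _)
  rw [Complex.norm_exp, h_re, ← Real.exp_add]
  exact Real.exp_le_exp.2 (by linarith)

theorem exists_norm_wfun_le {h ε : ℝ} (h₁ : h < k₁) (h₂ : h < k₂) (hε₀ : 0 ≤ ε)
    (hε : ε < min (4 * φ) (4 * (Real.pi - φ))) :
    ∃ C, ∀ z : ℂ, |z.im| ≤ h → ‖wfun k₁ k₂ t φ z‖ ≤ C * Real.exp (-ε * |z.re|) := by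
  let κ := |2 * φ - Real.pi|
  let θ := (ε + 2 * κ) / 4
  have hθ₀ : 0 ≤ θ := by positivity
  have hθ : |θ| < Real.pi / 2 := by
    obtain ⟨hε₁, hε₂⟩ := lt_min_iff.1 hε
    have hκ : κ < Real.pi - ε / 2 := abs_lt.2 ⟨by linarith, by linarith⟩
    rw [abs_of_nonneg hθ₀]
    simp only [θ]
    linarith
  obtain ⟨C₁, hC₁₀, hC₁⟩ := exists_norm_gammaPair_le h₁ hθ
  obtain ⟨C₂, _, hC₂⟩ := exists_norm_gammaPair_le h₂ hθ
  refine ⟨1 / (2 * Real.pi) * Real.exp (|t| * κ) * (C₁ * Real.exp (2 * θ * |t|)) * C₂,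
    fun z hz => ?_⟩
  have h_exp : ‖Complex.exp ((2 * z + t) * (2 * φ - Real.pi))‖ ≤
      Real.exp (|t| * κ) * Real.exp (2 * κ * |z.re|) := by
    exact_mod_cast norm_cexp_two_mul_add_mul_le t (2 * φ - Real.pi) z
  have h_pair₁ : ‖gammaPair k₁ (t + z)‖ ≤
      C₁ * Real.exp (2 * θ * |t|) * Real.exp (-(2 * θ) * |z.re|) := by
    have h_abs : |z.re| ≤ |t + z.re| + |t| := by simpa using abs_sub (t + z.re) t
    refine (hC₁ (t + z) (by simpa using hz)).trans ?_
    rw [mul_assoc, ← Real.exp_add]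
    gcongr
    simp only [Complex.add_re, Complex.ofReal_re]
    nlinarith
  calc ‖wfun k₁ k₂ t φ z‖ ≤ 1 / (2 * Real.pi) * (Real.exp (|t| * κ) * Real.exp (2 * κ * |z.re|)) *
        (C₁ * Real.exp (2 * θ * |t|) * Real.exp (-(2 * θ) * |z.re|)) *
        (C₂ * Real.exp (-(2 * θ) * |z.re|)) := by
        rw [wfun_eq_mul_gammaPair, norm_mul, norm_mul, norm_mul, Complex.norm_real,
          Real.norm_of_nonneg (by positivity)]
        gcongr
        exact hC₂ z hz
    _ = 1 / (2 * Real.pi) * Real.exp (|t| * κ) * (C₁ * Real.exp (2 * θ * |t|)) * C₂ *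
        Real.exp (2 * κ * |z.re| + -(2 * θ) * |z.re| + -(2 * θ) * |z.re|) := by
        simp only [Real.exp_add]
        ring
    _ = _ := by
        simp only [θ]
        ring_nf

theorem exists_integrable_norm_eval_mul_wfun_le (q : Polynomial ℂ) (t : ℝ) {h : ℝ} (h₁ : h < k₁)
    (h₂ : h < k₂) (hφ₀ : 0 < φ) (hφπ : φ < Real.pi) :
    ∃ g : ℝ → ℝ, Integrable g ∧
      ∀ z : ℂ, |z.im| ≤ h → ‖q.eval z * wfun k₁ k₂ t φ z‖ ≤ g z.re := by
  obtain ⟨ε, hε₀, hε⟩ : ∃ ε, 0 < ε ∧ ε < min (4 * φ) (4 * (Real.pi - φ)) :=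
    exists_between (lt_min (by linarith) (by linarith))
  obtain ⟨C, hC⟩ := exists_norm_eval_le_mul_exp q (half_pos hε₀)
  obtain ⟨D, hD⟩ := exists_norm_wfun_le (t := t) h₁ h₂ hε₀.le hε
  refine ⟨fun x => C * Real.exp (ε / 2 * h) * D * Real.exp (-(ε / 2) * |x|),
    (integrable_exp_neg_mul_abs (half_pos hε₀)).const_mul _, fun z hz => ?_⟩
  have hC₀ : 0 ≤ C := by simpa using (norm_nonneg _).trans (hC 0)
  have hz_norm : ‖z‖ ≤ |z.re| + h :=
    (Complex.norm_le_abs_re_add_abs_im z).trans (by linarith)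
  calc ‖q.eval z * wfun k₁ k₂ t φ z‖
      ≤ C * Real.exp (ε / 2 * (|z.re| + h)) * (D * Real.exp (-ε * |z.re|)) := by
        rw [norm_mul]
        gcongr
        · exact (hC z).trans (by gcongr)
        · exact hD z hz
    _ = C * Real.exp (ε / 2 * h) * D * Real.exp (ε / 2 * |z.re| + -ε * |z.re|) := by
        rw [mul_add, Real.exp_add, Real.exp_add]
        ring
    _ = _ := by ring_nf

theorem differentiableOn_eval_mul_wfun (q : Polynomial ℂ) (t φ : ℝ) {h : ℝ} (h₁ : h < k₁)
    (h₂ : h < k₂) :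
    DifferentiableOn ℂ (fun z => q.eval z * wfun k₁ k₂ t φ z) {z | |z.im| ≤ h} := fun z hz =>
  (q.differentiable z |>.mul (differentiableAt_wfun (lt_of_le_of_lt hz h₁)
    (lt_of_le_of_lt hz h₂))).differentiableWithinAt

theorem im_preimage_uIcc_zero_subset (y : ℝ) :
    Complex.im ⁻¹' [[0, y]] ⊆ {z | |z.im| ≤ |y|} := fun z hz => by
  simpa using abs_sub_left_of_mem_uIcc hz

theorem integrable_eval_mul_wfun_horizontal (q : Polynomial ℂ) {y : ℝ} (h₁ : |y| < k₁)
    (h₂ : |y| < k₂) (hφ₀ : 0 < φ) (hφπ : φ < Real.pi) :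
    Integrable fun x : ℝ => q.eval (x + y * I) * wfun k₁ k₂ t φ (x + y * I) := by
  obtain ⟨g, hg, hgw⟩ := exists_integrable_norm_eval_mul_wfun_le q t h₁ h₂ hφ₀ hφπ
  have h_strip := im_preimage_uIcc_zero_subset y
  exact integrable_horizontal_of_norm_le (f := fun z => q.eval z * wfun k₁ k₂ t φ z)
    ((differentiableOn_eval_mul_wfun q t φ h₁ h₂).mono h_strip).continuousOn hg
    (fun z hz => hgw z (h_strip hz)) right_mem_uIcc

theorem integral_eval_mul_wfun_horizontal (q : Polynomial ℂ) {y : ℝ} (h₁ : |y| < k₁)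
    (h₂ : |y| < k₂) (hφ₀ : 0 < φ) (hφπ : φ < Real.pi) :
    ∫ x : ℝ, q.eval (x + y * I) * wfun k₁ k₂ t φ (x + y * I) =
      ∫ x : ℝ, q.eval (x : ℂ) * wfun k₁ k₂ t φ x := by
  obtain ⟨g, hg, hgw⟩ := exists_integrable_norm_eval_mul_wfun_le q t h₁ h₂ hφ₀ hφπ
  have h_strip := im_preimage_uIcc_zero_subset y
  simpa using (integral_horizontal_eq_of_norm_le (f := fun z => q.eval z * wfun k₁ k₂ t φ z)
    ((differentiableOn_eval_mul_wfun q t φ h₁ h₂).mono h_strip) hg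
    (fun z hz => hgw z (h_strip hz))).symm

theorem integrable_eval_mul_wfun (q : Polynomial ℂ) (hk₁ : 0 < k₁) (hk₂ : 0 < k₂) (hφ₀ : 0 < φ)
    (hφπ : φ < Real.pi) : Integrable fun x : ℝ => q.eval (x : ℂ) * wfun k₁ k₂ t φ x := by
  simpa using integrable_eval_mul_wfun_horizontal (t := t) q (y := 0) (by simpa) (by simpa) hφ₀ hφπ

theorem continuous_wfun_ofReal (hk₁ : 0 < k₁) (hk₂ : 0 < k₂) :
    Continuous fun x : ℝ => wfun k₁ k₂ t φ x :=
  continuous_iff_continuousAt.2 fun _ =>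
    (differentiableAt_wfun (by simpa) (by simpa)).continuousAt.comp
      Complex.continuous_ofReal.continuousAt

theorem integrable_exp_mul_abs_mul_wfun_re {ε : ℝ} (hk₁ : 0 < k₁) (hk₂ : 0 < k₂) (hε₀ : 0 ≤ ε)
    (hε : ε < min (4 * φ) (4 * (Real.pi - φ))) :
    Integrable fun x : ℝ => Real.exp (ε * |x|) * (wfun k₁ k₂ t φ x).re := by
  obtain ⟨ε', hε', hε'_lt⟩ := exists_between hε
  obtain ⟨C, hC⟩ := exists_norm_wfun_le (t := t) hk₁ hk₂ (hε₀.trans hε'.le) hε'_lt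
  have h_cont := Complex.continuous_re.comp (continuous_wfun_ofReal (t := t) (φ := φ) hk₁ hk₂)
  have h_exp_cont : Continuous fun x : ℝ => Real.exp (ε * |x|) := by fun_prop
  refine ((integrable_exp_neg_mul_abs (sub_pos.2 hε')).const_mul C).mono'
    (h_exp_cont.mul h_cont).aestronglyMeasurable (.of_forall fun x => ?_)
  calc ‖Real.exp (ε * |x|) * (wfun k₁ k₂ t φ x).re‖
      ≤ Real.exp (ε * |x|) * (C * Real.exp (-ε' * |x|)) := by
        rw [norm_mul, Real.norm_of_nonneg (Real.exp_nonneg _)]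
        gcongr
        exact (Complex.abs_re_le_norm _).trans (by simpa using hC x (by simp))
    _ = C * Real.exp (ε * |x| + -ε' * |x|) := by
        rw [Real.exp_add]
        ring
    _ = _ := by ring_nf

theorem integrable_exp_mul_abs_wMeasure {ε : ℝ} (hk₁ : 0 < k₁) (hk₂ : 0 < k₂) (hε₀ : 0 ≤ ε)
    (hε : ε < min (4 * φ) (4 * (Real.pi - φ))) :
    Integrable (fun x : ℝ => Real.exp (ε * |x|)) (wMeasure k₁ k₂ t φ) := by
  have h_meas : Measurable fun x : ℝ => ENNReal.ofReal (wfun k₁ k₂ t φ x).re :=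
    ENNReal.measurable_ofReal.comp
      (Complex.measurable_re.comp (continuous_wfun_ofReal hk₁ hk₂).measurable)
  rw [wMeasure, integrable_withDensity_iff h_meas (.of_forall fun _ => ENNReal.ofReal_lt_top)]
  refine (integrable_exp_mul_abs_mul_wfun_re (t := t) hk₁ hk₂ hε₀ hε).pos_part.congr
    (.of_forall fun x => ?_)
  simp only [ENNReal.toReal_ofReal', mul_max_of_nonneg _ _ (Real.exp_nonneg _), mul_zero]

theorem conj_wfun (k₁ k₂ t φ : ℝ) (z : ℂ) :
    conj (wfun k₁ k₂ t φ z) = wfun k₁ k₂ t φ (conj z) := by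
  simp [wfun_eq_mul_gammaPair, conj_gammaPair, ← Complex.exp_conj, map_ofNat]

theorem conj_alphaP (k₁ k₂ t φ : ℝ) (z : ℂ) :
    conj (alphaP k₁ k₂ t φ z) = alphaM k₁ k₂ t φ (conj z) := by
  simp [alphaP, alphaM, ← Complex.exp_conj, map_ofNat]

theorem conj_alphaM (k₁ k₂ t φ : ℝ) (z : ℂ) :
    conj (alphaM k₁ k₂ t φ z) = alphaP k₁ k₂ t φ (conj z) := by
  simpa using congrArg conj (conj_alphaP k₁ k₂ t φ (conj z)).symm

theorem conj_betaF (k₁ k₂ t : ℝ) (z : ℂ) : conj (betaF k₁ k₂ t z) = betaF k₁ k₂ t (conj z) := by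
  simp [betaF, map_ofNat]

theorem alphaP_mul_wfun (h₁ : |z.im| < k₁) (h₂ : |z.im| < k₂) :
    alphaP k₁ k₂ t φ z * wfun k₁ k₂ t φ z =
      wfun (k₁ + 1 / 2) (k₂ + 1 / 2) t φ (z + I / 2) := by
  have h_ne {k : ℝ} {w : ℂ} (hw : |w.im| < k) : (k : ℂ) - I * w ≠ 0 := by
    have h_re : 0 < ((k : ℂ) - I * w).re := by
      simpa [← neg_lt_iff_pos_add'] using neg_lt.1 ((neg_le_abs w.im).trans_lt hw)
    exact fun h_eq => h_re.ne' (by rw [h_eq, Complex.zero_re])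
  have h_exp : Complex.exp ((2 * (z + I / 2) + t) * (2 * φ - Real.pi)) =
      -Complex.exp (2 * I * φ) * Complex.exp ((2 * z + t) * (2 * φ - Real.pi)) := by
    rw [neg_mul, ← Complex.exp_add, ← Complex.exp_sub_pi_mul_I]
    ring_nf
  rw [wfun_eq_mul_gammaPair, wfun_eq_mul_gammaPair, h_exp, ← add_assoc,
    gammaPair_add_half (h_ne (by simpa using h₁)), gammaPair_add_half (h_ne h₂), alphaP]
  ring

theorem alphaM_mul_wfun (h₁ : |z.im| < k₁) (h₂ : |z.im| < k₂) :
    alphaM k₁ k₂ t φ z * wfun k₁ k₂ t φ z =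
      wfun (k₁ + 1 / 2) (k₂ + 1 / 2) t φ (z - I / 2) := by
  have h_conj := congrArg conj (alphaP_mul_wfun (k₁ := k₁) (k₂ := k₂) (t := t) (φ := φ)
    (z := conj z) (by simpa using h₁) (by simpa using h₂))
  simpa [conj_wfun, conj_alphaP, map_ofNat, sub_eq_add_neg, neg_div] using h_conj

end Weight

section Symmetry

variable {k₁ k₂ t φ : ℝ}

open Polynomial in
/-- The polynomial `q(z + i/2) s(z − i/2)`. Multiplied by the weight with `k₁`, `k₂` raised by
`1/2`, it interpolates between the `α₊` and the `α₋` terms of the two sides of the symmetry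
relation. -/
def shiftedProduct (q s : Polynomial ℂ) : Polynomial ℂ :=
  q.comp (X + C (I / 2)) * s.comp (X - C (I / 2))

theorem eval_shiftedProduct (q s : Polynomial ℂ) (z : ℂ) :
    (shiftedProduct q s).eval z = q.eval (z + I / 2) * s.eval (z - I / 2) := by
  simp [shiftedProduct]

theorem alphaP_mul_eval_mul_wfun (q s : Polynomial ℂ) (hk₁ : 0 < k₁) (hk₂ : 0 < k₂) (x : ℝ) :
    alphaP k₁ k₂ t φ x * q.eval (x + I) * s.eval (x : ℂ) * wfun k₁ k₂ t φ x =
      (shiftedProduct q s).eval (x + (1 / 2 : ℝ) * I) *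
        wfun (k₁ + 1 / 2) (k₂ + 1 / 2) t φ (x + (1 / 2 : ℝ) * I) := by
  have h_half : (x + (1 / 2 : ℝ) * I : ℂ) = x + I / 2 := by
    push_cast
    ring
  rw [h_half, ← alphaP_mul_wfun (by simpa) (by simpa), eval_shiftedProduct, add_assoc, add_halves,
    add_sub_cancel_right]
  ring

theorem alphaM_mul_eval_mul_wfun (q s : Polynomial ℂ) (hk₁ : 0 < k₁) (hk₂ : 0 < k₂) (x : ℝ) :
    alphaM k₁ k₂ t φ x * s.eval (x - I) * q.eval (x : ℂ) * wfun k₁ k₂ t φ x =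
      (shiftedProduct q s).eval (x + (-(1 / 2) : ℝ) * I) *
        wfun (k₁ + 1 / 2) (k₂ + 1 / 2) t φ (x + (-(1 / 2) : ℝ) * I) := by
  have h_half : (x + (-(1 / 2) : ℝ) * I : ℂ) = x - I / 2 := by
    push_cast
    ring
  rw [h_half, ← alphaM_mul_wfun (by simpa) (by simpa), eval_shiftedProduct, sub_sub, add_halves,
    sub_add_cancel]
  ring

theorem integrable_alphaP_mul_eval_mul_wfun (q s : Polynomial ℂ) (hk₁ : 0 < k₁) (hk₂ : 0 < k₂)
    (hφ₀ : 0 < φ) (hφπ : φ < Real.pi) :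
    Integrable fun x : ℝ =>
      alphaP k₁ k₂ t φ x * q.eval (x + I) * s.eval (x : ℂ) * wfun k₁ k₂ t φ x := by
  simp only [alphaP_mul_eval_mul_wfun q s hk₁ hk₂]
  exact integrable_eval_mul_wfun_horizontal _ (by norm_num [abs_of_pos, hk₁])
    (by norm_num [abs_of_pos, hk₂]) hφ₀ hφπ

theorem integrable_alphaM_mul_eval_mul_wfun (q s : Polynomial ℂ) (hk₁ : 0 < k₁) (hk₂ : 0 < k₂)
    (hφ₀ : 0 < φ) (hφπ : φ < Real.pi) :
    Integrable fun x : ℝ =>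
      alphaM k₁ k₂ t φ x * s.eval (x - I) * q.eval (x : ℂ) * wfun k₁ k₂ t φ x := by
  simp only [alphaM_mul_eval_mul_wfun q s hk₁ hk₂]
  exact integrable_eval_mul_wfun_horizontal _ (by norm_num [abs_of_pos, hk₁])
    (by norm_num [abs_of_pos, hk₂]) hφ₀ hφπ

theorem integral_alphaP_mul_eval_mul_wfun (q s : Polynomial ℂ) (hk₁ : 0 < k₁) (hk₂ : 0 < k₂)
    (hφ₀ : 0 < φ) (hφπ : φ < Real.pi) :
    ∫ x : ℝ, alphaP k₁ k₂ t φ x * q.eval (x + I) * s.eval (x : ℂ) * wfun k₁ k₂ t φ x =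
      ∫ x : ℝ, alphaM k₁ k₂ t φ x * s.eval (x - I) * q.eval (x : ℂ) * wfun k₁ k₂ t φ x := by
  simp only [alphaP_mul_eval_mul_wfun q s hk₁ hk₂, alphaM_mul_eval_mul_wfun q s hk₁ hk₂]
  have h_shift {y : ℝ} (hy : |y| = 1 / 2) :=
    integral_eval_mul_wfun_horizontal (k₁ := k₁ + 1 / 2) (k₂ := k₂ + 1 / 2) (t := t) (y := y)
      (shiftedProduct q s) (by linarith) (by linarith) hφ₀ hφπ
  rw [h_shift (by norm_num), h_shift (by norm_num)]

theorem integrable_betaF_mul_eval_mul_wfun (q s : Polynomial ℂ) (hk₁ : 0 < k₁) (hk₂ : 0 < k₂)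
    (hφ₀ : 0 < φ) (hφπ : φ < Real.pi) :
    Integrable fun x : ℝ =>
      betaF k₁ k₂ t x * q.eval (x : ℂ) * s.eval (x : ℂ) * wfun k₁ k₂ t φ x := by
  let b : Polynomial ℂ := .C (k₁ * (1 - k₁) + k₂ * (1 - k₂)) - 2 * (.C (t : ℂ) + .X) * .X
  simpa [b, betaF] using integrable_eval_mul_wfun (t := t) (b * q * s) hk₁ hk₂ hφ₀ hφπ

theorem integral_Lam_mul_eval_mul_wfun (q s : Polynomial ℂ) (hk₁ : 0 < k₁) (hk₂ : 0 < k₂)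
    (hφ₀ : 0 < φ) (hφπ : φ < Real.pi) :
    ∫ x : ℝ, Lam k₁ k₂ t φ (fun z => q.eval z) x * s.eval (x : ℂ) * wfun k₁ k₂ t φ x =
      (∫ x : ℝ, alphaP k₁ k₂ t φ x * q.eval (x + I) * s.eval (x : ℂ) * wfun k₁ k₂ t φ x) +
      (∫ x : ℝ, betaF k₁ k₂ t x * q.eval (x : ℂ) * s.eval (x : ℂ) * wfun k₁ k₂ t φ x) +
      ∫ x : ℝ, alphaM k₁ k₂ t φ x * q.eval (x - I) * s.eval (x : ℂ) * wfun k₁ k₂ t φ x := by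
  have h_plus := integrable_alphaP_mul_eval_mul_wfun (t := t) q s hk₁ hk₂ hφ₀ hφπ
  have h_beta := integrable_betaF_mul_eval_mul_wfun (t := t) q s hk₁ hk₂ hφ₀ hφπ
  have h_minus := integrable_alphaM_mul_eval_mul_wfun (t := t) s q hk₁ hk₂ hφ₀ hφπ
  simp only [Lam, add_mul]
  exact (integral_add (h_plus.add h_beta) h_minus).trans
    (congrArg (· + _) (integral_add h_plus h_beta))

theorem integral_Lam_mul_eval_mul_wfun_comm (q s : Polynomial ℂ) (hk₁ : 0 < k₁) (hk₂ : 0 < k₂)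
    (hφ₀ : 0 < φ) (hφπ : φ < Real.pi) :
    ∫ x : ℝ, Lam k₁ k₂ t φ (fun z => q.eval z) x * s.eval (x : ℂ) * wfun k₁ k₂ t φ x =
      ∫ x : ℝ, Lam k₁ k₂ t φ (fun z => s.eval z) x * q.eval (x : ℂ) * wfun k₁ k₂ t φ x := by
  rw [integral_Lam_mul_eval_mul_wfun q s hk₁ hk₂ hφ₀ hφπ,
    integral_Lam_mul_eval_mul_wfun s q hk₁ hk₂ hφ₀ hφπ,
    integral_alphaP_mul_eval_mul_wfun q s hk₁ hk₂ hφ₀ hφπ,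
    integral_alphaP_mul_eval_mul_wfun s q hk₁ hk₂ hφ₀ hφπ]
  simp only [mul_right_comm (betaF _ _ _ _)]
  ring

theorem conj_Lam_eval (r : Polynomial ℂ) (z : ℂ) :
    conj (Lam k₁ k₂ t φ (fun z => r.eval z) z) =
      Lam k₁ k₂ t φ (fun z => (r.map (starRingEnd ℂ)).eval z) (conj z) := by
  simp only [Lam, map_add, map_mul, conj_alphaP, conj_alphaM, conj_betaF,
    ← Polynomial.eval_map_apply (starRingEnd ℂ), map_sub, Complex.conj_I,
    ← sub_eq_add_neg, sub_neg_eq_add]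
  ring

theorem integral_Lam_mul_conj_eval_mul_wfun (q r : Polynomial ℂ) (hk₁ : 0 < k₁) (hk₂ : 0 < k₂)
    (hφ₀ : 0 < φ) (hφπ : φ < Real.pi) :
    ∫ x : ℝ, Lam k₁ k₂ t φ (fun z => q.eval z) x * conj (r.eval (x : ℂ)) * wfun k₁ k₂ t φ x =
      ∫ x : ℝ, q.eval (x : ℂ) * conj (Lam k₁ k₂ t φ (fun z => r.eval z) x) *
        wfun k₁ k₂ t φ x := by
  simp only [← Polynomial.eval_map_apply (starRingEnd ℂ), conj_Lam_eval, Complex.conj_ofReal,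
    mul_comm (q.eval _)]
  exact integral_Lam_mul_eval_mul_wfun_comm q _ hk₁ hk₂ hφ₀ hφπ

end Symmetry

/-- The weight has finite exponential moments (hence the moment problem is determinate),
the polynomials are dense in `L²(ℝ, w(x)dx)`, and `Λ` is symmetric on polynomials:
`(Λ, 𝒟)` is a densely defined symmetric operator on `L²(ℝ, w(x)dx)`. -/
theorem Lam_densely_defined_symmetric (k₁ k₂ : ℝ) (hk₁ : 0 < k₁) (hk₂ : 0 < k₂) (t : ℝ)
    (φ : ℝ) (hφ₀ : 0 < φ) (hφπ : φ < Real.pi) :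
    (∀ ε : ℝ, 0 < ε → ε < min (4 * φ) (4 * (Real.pi - φ)) →
      Integrable (fun x : ℝ => Real.exp (ε * |x|) * (wfun k₁ k₂ t φ (x : ℂ)).re)) ∧
    Dense {u : Lp ℂ 2 (wMeasure k₁ k₂ t φ) |
      ∃ q : Polynomial ℂ, ∀ᵐ x ∂(wMeasure k₁ k₂ t φ), u x = q.eval (x : ℂ)} ∧
    (∀ q r : Polynomial ℂ,
      (∫ x : ℝ, Lam k₁ k₂ t φ (fun z => q.eval z) (x : ℂ) * conj (r.eval (x : ℂ)) *
          wfun k₁ k₂ t φ (x : ℂ)) =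
      ∫ x : ℝ, q.eval (x : ℂ) * conj (Lam k₁ k₂ t φ (fun z => r.eval z) (x : ℂ)) *
          wfun k₁ k₂ t φ (x : ℂ)) := by
  obtain ⟨ε, hε₀, hε⟩ : ∃ ε, 0 < ε ∧ ε < min (4 * φ) (4 * (Real.pi - φ)) :=
    exists_between (lt_min (by linarith) (by linarith))
  refine ⟨fun ε hε₀ hε => integrable_exp_mul_abs_mul_wfun_re hk₁ hk₂ hε₀.le hε, ?_,
    fun q r => integral_Lam_mul_conj_eval_mul_wfun q r hk₁ hk₂ hφ₀ hφπ⟩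
  exact (Submodule.dense_iff_topologicalClosure_eq_top).2
    (topologicalClosure_polynomialSubmodule hε₀ (integrable_exp_mul_abs_wMeasure hk₁ hk₂ hε₀.le hε))
end
end
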